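/- arXiv:1809.07020 — 2 statements merged into one kernel-verified Lean document; each statement's English description precedes it below -/
import Mathlib

section
/- Strong maximum principle: Let Ω ⊂ ℝ^N be a bounded domain, s ∈ (0,1), p ∈ (1,∞), V ∈ L¹_loc(Ω). Suppose u ∈ W₀^(s,p)(Ω) is nontrivial, nonnegative, Vu^(p-1) ∈ L¹_loc(Ω), and for all nonnegative v ∈ W₀^(s,p)(Ω) ∩ L^∞_loc(Ω): ∫∫ |u(x)-u(y)|^(p-2)(u(x)-u(y))(v(x)-v(y))/|x-y|^(N+sp) dx dy + ∫_Ω V u^(p-1) v dx ≥ 0. Then u > 0 almost everywhere in Ω. -/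
open MeasureTheory Metric Set Filter

noncomputable section

/-- The Gagliardo `p`-energy `‖u‖^p = ∫∫ |u(x)-u(y)|^p / |x-y|^{N+sp} dx dy`. -/
def gagE (N : ℕ) (s p : ℝ) (u : EuclideanSpace ℝ (Fin N) → ℝ) : ℝ :=
  ∫ x, ∫ y, |u x - u y| ^ p / ‖x - y‖ ^ ((N : ℝ) + s * p)

/-- The Gagliardo norm of `W₀^{s,p}`. -/
def gagNorm (N : ℕ) (s p : ℝ) (u : EuclideanSpace ℝ (Fin N) → ℝ) : ℝ :=
  gagE N s p u ^ (1 / p)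

/-- Membership in `W₀^{s,p}(Ω)`: measurable, finite Gagliardo energy, vanishing outside `Ω`. -/
def memW0 (N : ℕ) (s p : ℝ) (Ω : Set (EuclideanSpace ℝ (Fin N)))
    (u : EuclideanSpace ℝ (Fin N) → ℝ) : Prop :=
  Measurable u ∧
  Integrable (fun z : EuclideanSpace ℝ (Fin N) × EuclideanSpace ℝ (Fin N) =>
    |u z.1 - u z.2| ^ p / ‖z.1 - z.2‖ ^ ((N : ℝ) + s * p)) ∧
  ∀ x, x ∉ Ω → u x = 0

/-- The fractional `p`-Laplacian pairing `⟨A u, v⟩`. -/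
def fracPair (N : ℕ) (s p : ℝ) (u v : EuclideanSpace ℝ (Fin N) → ℝ) : ℝ :=
  ∫ x, ∫ y, |u x - u y| ^ (p - 2) * (u x - u y) * (v x - v y) / ‖x - y‖ ^ ((N : ℝ) + s * p)

/-- `q` is below the critical exponent `p*ₛ = Np/(N-sp)` (`= ∞` if `sp ≥ N`). -/
def subCrit (N : ℕ) (s p q : ℝ) : Prop :=
  s * p < N → q < N * p / ((N : ℝ) - s * p)

/-- The class `W_q`: `h ρ^{sa} ∈ L^r(Ω)` for some `a ∈ [0,q)`, `r ∈ (1,∞)` with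
`1/r + a/p + (q-a)/p*ₛ < 1` (the last term read as `0` when `p*ₛ = ∞`). -/
def inWq (N : ℕ) (Ω : Set (EuclideanSpace ℝ (Fin N))) (s p q : ℝ)
    (h : EuclideanSpace ℝ (Fin N) → ℝ) : Prop :=
  ∃ a r : ℝ, 0 ≤ a ∧ a < q ∧ 1 < r ∧
    ((s * p < N ∧ 1 / r + a / p + (q - a) * ((N : ℝ) - s * p) / ((N : ℝ) * p) < 1) ∨
      (¬ s * p < N ∧ 1 / r + a / p < 1)) ∧
    IntegrableOn (fun x => |h x * infDist x (frontier Ω) ^ (s * a)| ^ r) Ω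

/-- The class `W̃_q`: `h ρ^{sa} ∈ L^r(Ω)` for some `a ∈ [0,1]`, `r ∈ (1,∞)` with
`1/r + a/p + (max{p,q}-a)/p*ₛ < 1`. -/
def inWtq (N : ℕ) (Ω : Set (EuclideanSpace ℝ (Fin N))) (s p q : ℝ)
    (h : EuclideanSpace ℝ (Fin N) → ℝ) : Prop :=
  ∃ a r : ℝ, 0 ≤ a ∧ a ≤ 1 ∧ 1 < r ∧
    ((s * p < N ∧
        1 / r + a / p + (max p q - a) * ((N : ℝ) - s * p) / ((N : ℝ) * p) < 1) ∨
      (¬ s * p < N ∧ 1 / r + a / p < 1)) ∧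
    IntegrableOn (fun x => |h x * infDist x (frontier Ω) ^ (s * a)| ^ r) Ω

/-- Weak convergence `uₙ ⇀ u` in `W₀^{s,p}(Ω)`: bounded Gagliardo norms together with
convergence against all continuous compactly supported test functions (a total family in
the dual `W^{-s,p'}(Ω)`). -/
def weakConv (N : ℕ) (s p : ℝ) (u_ : ℕ → EuclideanSpace ℝ (Fin N) → ℝ)
    (u : EuclideanSpace ℝ (Fin N) → ℝ) : Prop :=
  (∃ M : ℝ, ∀ n, gagNorm N s p (u_ n) ≤ M) ∧
  ∀ φ : EuclideanSpace ℝ (Fin N) → ℝ, Continuous φ → HasCompactSupport φ →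
    Tendsto (fun n => ∫ x, u_ n x * φ x) atTop (nhds (∫ x, u x * φ x))

/-- The first eigenvalue `λ₁ = inf{‖u‖^p : u ∈ W₀^{s,p}(Ω), ∫_Ω h|u|^p = 1}`. -/
def lam1 (N : ℕ) (s p : ℝ) (Ω : Set (EuclideanSpace ℝ (Fin N)))
    (h : EuclideanSpace ℝ (Fin N) → ℝ) : ℝ :=
  sInf {t : ℝ | ∃ u, memW0 N s p Ω u ∧ (∫ x in Ω, h x * |u x| ^ p) = 1 ∧ t = gagE N s p u}

/-- `(λ, u)` is an eigenpair of `(-Δ)ₚˢ u = λ h |u|^{p-2} u` in `Ω`, `u = 0` outside `Ω`. -/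
def isEigenpair (N : ℕ) (s p : ℝ) (Ω : Set (EuclideanSpace ℝ (Fin N)))
    (h : EuclideanSpace ℝ (Fin N) → ℝ) (lam : ℝ)
    (u : EuclideanSpace ℝ (Fin N) → ℝ) : Prop :=
  memW0 N s p Ω u ∧ ¬ (∀ᵐ x ∂volume.restrict Ω, u x = 0) ∧
  ∀ v, memW0 N s p Ω v →
    fracPair N s p u v = lam * ∫ x in Ω, h x * |u x| ^ (p - 2) * u x * v x

/-
Let `φ ≥ 0` be a Lipschitz bump supported in `Ω` and test the supersolution with
`vₙ = φ · (1 - n u⁺)⁺`, which decreases to `φ · 1_{u = 0}`. The potential term tends to `0` because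
`V u^{p-1}` vanishes on `{u = 0}`. The pairing integrand of `u` and `vₙ` is bounded above by the
integrable function `|pairing integrand of u and φ|`, since `t ↦ (1 - n t⁺)⁺` is decreasing, and its
pointwise limit is nonpositive; as the integrals are asymptotically nonnegative, this limit vanishes
almost everywhere. But at a pair `(x, y)` with `u x = 0`, `φ x > 0` and `u y > 0` it is strictly
negative. Because all pairs `(x, y)` interact, however far apart, `{u = 0} ∩ {φ > 0}` must be null
unless `u = 0` almost everywhere.
-/

section RealInequalities

lemma abs_abs_rpow_sub_two_mul_self {p : ℝ} (hp : p ≠ 1) (a : ℝ) :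
    |(|a| ^ (p - 2) * a)| = |a| ^ (p - 1) := by
  rw [abs_mul, Real.abs_rpow_of_nonneg (abs_nonneg a), abs_abs,
    ← Real.rpow_add_one' (abs_nonneg a) (by contrapose! hp; linarith)]
  congr 1
  ring

lemma rpow_sub_one_mul_le_rpow_add_rpow {p a b : ℝ} (hp : 1 ≤ p) (ha : 0 ≤ a) (hb : 0 ≤ b) :
    a ^ (p - 1) * b ≤ a ^ p + b ^ p := by
  have rpow_sub_one_mul_self {m : ℝ} (hm : 0 ≤ m) : m ^ (p - 1) * m = m ^ p := by
    rw [← Real.rpow_add_one' hm (by linarith), sub_add_cancel]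
  have hap : 0 ≤ a ^ p := by positivity
  have hbp : 0 ≤ b ^ p := by positivity
  rcases le_total a b with hab | hba
  · calc a ^ (p - 1) * b ≤ b ^ (p - 1) * b := by gcongr
      _ ≤ a ^ p + b ^ p := by rw [rpow_sub_one_mul_self hb]; linarith
  · calc a ^ (p - 1) * b ≤ a ^ (p - 1) * a := by gcongr
      _ ≤ a ^ p + b ^ p := by rw [rpow_sub_one_mul_self ha]; linarith

lemma rpow_abs_mul_sub_mul_sub_le {p : ℝ} (hp : 1 ≤ p) {A B a a' b b' : ℝ} (ha : |a| ≤ A)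
    (hb' : |b'| ≤ B) :
    |a * b - a' * b'| ^ p ≤ 2 ^ (p - 1) * (A ^ p * |b - b'| ^ p + B ^ p * |a - a'| ^ p) := by
  have hA : 0 ≤ A := (abs_nonneg a).trans ha
  have hB : 0 ≤ B := (abs_nonneg b').trans hb'
  have leibniz : |a * b - a' * b'| ≤ A * |b - b'| + B * |a - a'| :=
    calc |a * b - a' * b'| = |a * (b - b') + b' * (a - a')| := by congr 1; ring
      _ ≤ |a| * |b - b'| + |b'| * |a - a'| := by
        simpa only [abs_mul] using abs_add_le (a * (b - b')) (b' * (a - a'))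
      _ ≤ A * |b - b'| + B * |a - a'| := by gcongr
  calc |a * b - a' * b'| ^ p ≤ (A * |b - b'| + B * |a - a'|) ^ p := by gcongr
    _ ≤ 2 ^ (p - 1) * ((A * |b - b'|) ^ p + (B * |a - a'|) ^ p) := by
      exact_mod_cast NNReal.rpow_add_le_mul_rpow_add_rpow
        ⟨A * |b - b'|, by positivity⟩ ⟨B * |a - a'|, by positivity⟩ hp
    _ = 2 ^ (p - 1) * (A ^ p * |b - b'| ^ p + B ^ p * |a - a'| ^ p) := by
      rw [Real.mul_rpow hA (abs_nonneg _), Real.mul_rpow hB (abs_nonneg _)]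

lemma abs_rpow_sub_two_mul_sub_mul_le_of_antitone {p : ℝ} {h : ℝ → ℝ} (hh : Antitone h)
    (hh0 : ∀ t, 0 ≤ h t) (hh1 : ∀ t, h t ≤ 1) {a b f g : ℝ} (hf : 0 ≤ f) :
    |a - b| ^ (p - 2) * (a - b) * (f * h a - g * h b) ≤
      |(|a - b| ^ (p - 2) * (a - b) * (f - g))| := by
  have antitone_part : (a - b) * (h a - h b) ≤ 0 := by
    rcases le_total a b with hab | hba
    · exact mul_nonpos_of_nonpos_of_nonneg (sub_nonpos.2 hab) (sub_nonneg.2 (hh hab))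
    · exact mul_nonpos_of_nonneg_of_nonpos (sub_nonneg.2 hba) (sub_nonpos.2 (hh hba))
  calc |a - b| ^ (p - 2) * (a - b) * (f * h a - g * h b)
      = |a - b| ^ (p - 2) * f * ((a - b) * (h a - h b)) +
          |a - b| ^ (p - 2) * (a - b) * (f - g) * h b := by ring
    _ ≤ |a - b| ^ (p - 2) * (a - b) * (f - g) * h b :=
      add_le_of_nonpos_left (mul_nonpos_of_nonneg_of_nonpos (by positivity) antitone_part)
    _ ≤ |(|a - b| ^ (p - 2) * (a - b) * (f - g))| * h b := by
      gcongr
      · exact hh0 b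
      · exact le_abs_self _
    _ ≤ |(|a - b| ^ (p - 2) * (a - b) * (f - g))| :=
      mul_le_of_le_one_right (abs_nonneg _) (hh1 b)

end RealInequalities

section Cutoff

/-- The decreasing piecewise linear cutoff equal to `1` on `(-∞, 0]` and to `0` on `[1/n, ∞)`;
as `n → ∞` it approximates the indicator of `(-∞, 0]`. -/
def cutoff (n : ℕ) (t : ℝ) : ℝ := (1 - n * t⁺)⁺

lemma cutoff_nonneg (n : ℕ) (t : ℝ) : 0 ≤ cutoff n t := posPart_nonneg _

lemma cutoff_le_one (n : ℕ) (t : ℝ) : cutoff n t ≤ 1 :=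
  sup_le (sub_le_self 1 (mul_nonneg n.cast_nonneg (posPart_nonneg t))) zero_le_one

lemma abs_cutoff_le_one (n : ℕ) (t : ℝ) : |cutoff n t| ≤ 1 :=
  (abs_of_nonneg (cutoff_nonneg n t)).trans_le (cutoff_le_one n t)

lemma antitone_cutoff (n : ℕ) : Antitone (cutoff n) := fun a b hab => by
  have : a⁺ ≤ b⁺ := posPart_mono hab
  exact posPart_mono (by gcongr)

lemma lipschitzWith_cutoff (n : ℕ) : LipschitzWith n (cutoff n) := by
  have dist_posPart_le (a b : ℝ) : dist a⁺ b⁺ ≤ dist a b := by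
    simpa using lipschitzWith_posPart.dist_le_mul a b
  refine LipschitzWith.of_dist_le_mul fun a b => ?_
  calc dist (cutoff n a) (cutoff n b) ≤ dist (1 - n * a⁺) (1 - n * b⁺) := dist_posPart_le _ _
    _ = n * dist a⁺ b⁺ := by
        rw [dist_sub_left, Real.dist_eq, ← mul_sub, abs_mul, Nat.abs_cast, Real.dist_eq]
    _ ≤ n * dist a b := by
        gcongr
        exact dist_posPart_le a b

lemma measurable_cutoff (n : ℕ) : Measurable (cutoff n) :=
  (lipschitzWith_cutoff n).continuous.measurable

lemma tendsto_cutoff (t : ℝ) :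
    Tendsto (fun n => cutoff n t) atTop (nhds ((Iic (0 : ℝ)).indicator 1 t)) := by
  refine tendsto_const_nhds.congr' ?_
  rcases le_or_gt t 0 with ht | ht
  · refine Eventually.of_forall fun n => ?_
    simp [cutoff, ht]
  · filter_upwards [tendsto_natCast_atTop_atTop.eventually_ge_atTop (1 / t)] with n hn
    have : 1 ≤ n * t := (div_le_iff₀ ht).1 hn
    rw [indicator_of_notMem (notMem_Iic.2 ht), cutoff, posPart_of_nonneg ht.le,
      posPart_eq_zero.2 (by linarith)]

end Cutoff

section L1Convergence

variable {X : Type*} [MeasurableSpace X] {μ : Measure X}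

lemma tendsto_integral_mul_cutoff {u g : X → ℝ} (hu : AEMeasurable u μ) (hu0 : ∀ᵐ x ∂μ, 0 ≤ u x)
    (hg : Integrable g μ) (hgu : ∀ x, u x = 0 → g x = 0) :
    Tendsto (fun n => ∫ x, g x * cutoff n (u x) ∂μ) atTop (nhds 0) := by
  rw [← integral_zero X ℝ (μ := μ)]
  refine tendsto_integral_of_dominated_convergence (fun x => ‖g x‖) (fun n => ?_) hg.norm
    (fun n => ?_) ?_
  · exact hg.aestronglyMeasurable.mul
      ((measurable_cutoff n).comp_aemeasurable hu).aestronglyMeasurable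
  · refine Eventually.of_forall fun x => ?_
    rw [norm_mul]
    exact mul_le_of_le_one_right (norm_nonneg _) (abs_cutoff_le_one n (u x))
  · filter_upwards [hu0] with x hx
    rcases hx.eq_or_lt with hx | hx
    · simp [hgu x hx.symm]
    · simpa [hx] using (tendsto_cutoff (u x)).const_mul (g x)

-- The positive parts vanish in `L¹` by dominated convergence, and the lower bound on the integrals
-- transfers this to the negative parts.
lemma tendsto_integral_norm_of_le_integral {F : ℕ → X → ℝ} {F₀ D : X → ℝ} {c : ℕ → ℝ}
    (hF : ∀ n, Integrable (F n) μ) (hD : Integrable D μ) (hFD : ∀ n, F n ≤ᵐ[μ] D)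
    (hlim : ∀ᵐ x ∂μ, Tendsto (fun n => F n x) atTop (nhds (F₀ x))) (hF₀ : F₀ ≤ᵐ[μ] 0)
    (hc : Tendsto c atTop (nhds 0)) (hcF : ∀ n, c n ≤ ∫ x, F n x ∂μ) :
    Tendsto (fun n => ∫ x, ‖F n x‖ ∂μ) atTop (nhds 0) := by
  have posPart_integrable (n : ℕ) : Integrable (fun x => (F n x)⁺) μ := (hF n).pos_part
  have posPart_tendsto : Tendsto (fun n => ∫ x, (F n x)⁺ ∂μ) atTop (nhds 0) := by
    rw [← integral_zero X ℝ (μ := μ)]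
    refine tendsto_integral_of_dominated_convergence (fun x => ‖D x‖)
      (fun n => (posPart_integrable n).aestronglyMeasurable) hD.norm (fun n => ?_) ?_
    · filter_upwards [hFD n] with x hx
      rw [Real.norm_of_nonneg (posPart_nonneg _)]
      exact sup_le (hx.trans (le_abs_self _)) (abs_nonneg _)
    · filter_upwards [hlim, hF₀] with x hx hx₀
      exact posPart_eq_zero.2 hx₀ ▸ (lipschitzWith_posPart.continuous.tendsto _).comp hx
  have upper_tendsto : Tendsto (fun n => 2 * ∫ x, (F n x)⁺ ∂μ - c n) atTop (nhds 0) := by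
    simpa using (posPart_tendsto.const_mul 2).sub hc
  refine squeeze_zero (fun n => by positivity) (fun n => ?_) upper_tendsto
  calc ∫ x, ‖F n x‖ ∂μ = ∫ x, (2 * (F n x)⁺ - F n x) ∂μ := by
        congr 1 with x
        rw [Real.norm_eq_abs, ← posPart_add_negPart]
        linarith [posPart_sub_negPart (F n x)]
    _ = 2 * ∫ x, (F n x)⁺ ∂μ - ∫ x, F n x ∂μ := by
        rw [integral_sub ((posPart_integrable n).const_mul 2) (hF n), integral_const_mul]
    _ ≤ 2 * ∫ x, (F n x)⁺ ∂μ - c n := sub_le_sub_left (hcF n) _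

lemma ae_eq_zero_of_tendsto_integral_norm {G : Type*} [NormedAddCommGroup G] {F : ℕ → X → G}
    {F₀ : X → G} (hF : ∀ n, Integrable (F n) μ)
    (hlim : ∀ᵐ x ∂μ, Tendsto (fun n => F n x) atTop (nhds (F₀ x)))
    (hnorm : Tendsto (fun n => ∫ x, ‖F n x‖ ∂μ) atTop (nhds 0)) : F₀ =ᵐ[μ] 0 := by
  have eLpNorm_tendsto : Tendsto (fun n => eLpNorm (F n) 1 μ) atTop (nhds 0) := by
    simpa only [eLpNorm_one_eq_lintegral_enorm, ofReal_integral_norm_eq_lintegral_enorm (hF _),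
      ENNReal.ofReal_zero] using ENNReal.tendsto_ofReal hnorm
  have eLpNorm_zero : eLpNorm F₀ 1 μ = 0 :=
    nonpos_iff_eq_zero.1 <| eLpNorm_tendsto.liminf_eq ▸
      Lp.eLpNorm_lim_le_liminf_eLpNorm (fun n => (hF n).aestronglyMeasurable) F₀ hlim
  exact (eLpNorm_eq_zero_iff (aestronglyMeasurable_of_tendsto_ae atTop
    (fun n => (hF n).aestronglyMeasurable) hlim) one_ne_zero).1 eLpNorm_zero

lemma integrable_mul_of_locallyIntegrableOn [TopologicalSpace X] [T2Space X]
    [OpensMeasurableSpace X] {R : Type*} [NormedRing R] [SecondCountableTopologyEither X R]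
    {f φ : X → R} {s : Set X} (hf : LocallyIntegrableOn f s μ) (hφ : Continuous φ)
    (hφc : HasCompactSupport φ) (hφs : tsupport φ ⊆ s) : Integrable (fun x => f x * φ x) μ :=
  (integrableOn_iff_integrable_of_support_subset fun _ hx =>
    subset_tsupport φ (right_ne_zero_of_mul hx)).1
    ((hf.integrableOn_compact_subset hφs hφc.isCompact).mul_continuousOn hφ.continuousOn
      hφc.isCompact)

end L1Convergence

section Gagliardo

variable {E : Type*} [NormedAddCommGroup E] {p α : ℝ} {u v φ : E → ℝ}

/-- The density of the Gagliardo energy `∫∫ |u(x)-u(y)|^p / ‖x-y‖^α` on `E × E`; the fractional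
Sobolev space `W^{s,p}(ℝ^N)` corresponds to `α = N + sp`. -/
def gagliardoIntegrand (p α : ℝ) (u : E → ℝ) (z : E × E) : ℝ :=
  |u z.1 - u z.2| ^ p / ‖z.1 - z.2‖ ^ α

/-- The density of the fractional `p`-Laplacian pairing of `u` and `v` on `E × E`, with the same
parameter `α` as in `gagliardoIntegrand`. -/
def fracPairIntegrand (p α : ℝ) (u v : E → ℝ) (z : E × E) : ℝ :=
  |u z.1 - u z.2| ^ (p - 2) * (u z.1 - u z.2) * (v z.1 - v z.2) / ‖z.1 - z.2‖ ^ α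

lemma gagliardoIntegrand_nonneg (p α : ℝ) (u : E → ℝ) (z : E × E) :
    0 ≤ gagliardoIntegrand p α u z := by
  unfold gagliardoIntegrand
  positivity

lemma gagliardoIntegrand_mul_le (hp : 1 ≤ p) {A B : ℝ} (hφ : ∀ x, |φ x| ≤ A)
    (hu : ∀ x, |u x| ≤ B) (z : E × E) :
    gagliardoIntegrand p α (fun x => φ x * u x) z ≤
      2 ^ (p - 1) * (A ^ p * gagliardoIntegrand p α u z + B ^ p * gagliardoIntegrand p α φ z) := by
  unfold gagliardoIntegrand
  rw [mul_div_assoc', mul_div_assoc', ← add_div, mul_div_assoc']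
  gcongr
  exact rpow_abs_mul_sub_mul_sub_le hp (hφ z.1) (hu z.2)

lemma gagliardoIntegrand_comp_le (hp : 0 ≤ p) {h : ℝ → ℝ} {K : NNReal} (hh : LipschitzWith K h)
    (z : E × E) :
    gagliardoIntegrand p α (fun x => h (u x)) z ≤ (K : ℝ) ^ p * gagliardoIntegrand p α u z := by
  unfold gagliardoIntegrand
  rw [mul_div_assoc', ← Real.mul_rpow K.coe_nonneg (abs_nonneg _)]
  gcongr
  exact hh.dist_le_mul (u z.1) (u z.2)

lemma exists_abs_sub_le_mul_min_norm_one {K : NNReal} (hφ : LipschitzWith K φ)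
    (hφc : HasCompactSupport φ) : ∃ C, 0 ≤ C ∧ ∀ x y, |φ x - φ y| ≤ C * min ‖x - y‖ 1 := by
  obtain ⟨A, hA⟩ := hφc.exists_bound_of_continuous hφ.continuous
  have hK : (K : ℝ) ≤ max (K : ℝ) (A + A) := le_max_left _ _
  have hC : 0 ≤ max (K : ℝ) (A + A) := K.coe_nonneg.trans hK
  refine ⟨max (K : ℝ) (A + A), hC, fun x y => ?_⟩
  rw [mul_min_of_nonneg _ _ hC, mul_one]
  refine le_min ?_ ?_
  · calc |φ x - φ y| ≤ K * ‖x - y‖ := by simpa [dist_eq_norm] using hφ.dist_le_mul x y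
      _ ≤ max (K : ℝ) (A + A) * ‖x - y‖ := by gcongr
  · calc |φ x - φ y| ≤ |φ x| + |φ y| := abs_sub _ _
      _ ≤ A + A := add_le_add (hA x) (hA y)
      _ ≤ max (K : ℝ) (A + A) := le_max_right _ _

lemma gagliardoIntegrand_le_indicator_tsupport (hp : 0 < p) {C : ℝ} (hC0 : 0 ≤ C)
    (hC : ∀ x y, |φ x - φ y| ≤ C * min ‖x - y‖ 1) (z : E × E) :
    gagliardoIntegrand p α φ z ≤ C ^ p *
      (((tsupport φ).indicator 1 z.1 + (tsupport φ).indicator 1 z.2) *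
        (min ‖z.1 - z.2‖ 1 ^ p / ‖z.1 - z.2‖ ^ α)) := by
  set kernel : ℝ := min ‖z.1 - z.2‖ 1 ^ p / ‖z.1 - z.2‖ ^ α
  have kernel_nonneg : 0 ≤ kernel := by positivity
  have le_kernel : gagliardoIntegrand p α φ z ≤ C ^ p * kernel := by
    rw [gagliardoIntegrand, mul_div_assoc', ← Real.mul_rpow hC0 (by positivity)]
    gcongr
    exact hC z.1 z.2
  by_cases h₁ : z.1 ∈ tsupport φ <;> by_cases h₂ : z.2 ∈ tsupport φ
  · simp only [indicator_of_mem, h₁, h₂, Pi.one_apply]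
    nlinarith [mul_nonneg (Real.rpow_nonneg hC0 p) kernel_nonneg]
  · simpa [h₁, h₂] using le_kernel
  · simpa [h₁, h₂] using le_kernel
  · simp [gagliardoIntegrand, h₁, h₂, image_eq_zero_of_notMem_tsupport, Real.zero_rpow hp.ne']

lemma abs_fracPairIntegrand_le (hp : 1 < p) (z : E × E) :
    |fracPairIntegrand p α u v z| ≤ gagliardoIntegrand p α u z + gagliardoIntegrand p α v z := by
  unfold fracPairIntegrand gagliardoIntegrand
  rw [abs_div, abs_mul, abs_abs_rpow_sub_two_mul_self hp.ne', ← add_div,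
    Real.abs_rpow_of_nonneg (norm_nonneg _), abs_norm]
  gcongr
  exact rpow_sub_one_mul_le_rpow_add_rpow hp.le (abs_nonneg _) (abs_nonneg _)

lemma fracPairIntegrand_mul_comp_le_of_antitone {h : ℝ → ℝ} (hh : Antitone h) (hh0 : ∀ t, 0 ≤ h t)
    (hh1 : ∀ t, h t ≤ 1) (hφ0 : ∀ x, 0 ≤ φ x) (z : E × E) :
    fracPairIntegrand p α u (fun x => φ x * h (u x)) z ≤ |fracPairIntegrand p α u φ z| := by
  unfold fracPairIntegrand
  rw [abs_div, Real.abs_rpow_of_nonneg (norm_nonneg _), abs_norm]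
  gcongr
  exact abs_rpow_sub_two_mul_sub_mul_le_of_antitone hh hh0 hh1 (hφ0 z.1)

lemma fracPairIntegrand_mul_indicator_nonpos (hφ0 : ∀ x, 0 ≤ φ x) {z : E × E} (h₁ : 0 ≤ u z.1)
    (h₂ : 0 ≤ u z.2) :
    fracPairIntegrand p α u (fun x => φ x * (Iic (0 : ℝ)).indicator 1 (u x)) z ≤ 0 := by
  have mul_indicator {t : ℝ} (ht : 0 ≤ t) : t * (Iic (0 : ℝ)).indicator 1 t = 0 := by
    rcases ht.eq_or_lt with rfl | ht <;> simp [*]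
  have indicator_nonneg (t : ℝ) : 0 ≤ (Iic (0 : ℝ)).indicator (1 : ℝ → ℝ) t :=
    indicator_apply_nonneg fun _ => zero_le_one
  have sub_mul_sub_nonpos : (u z.1 - u z.2) * (φ z.1 * (Iic (0 : ℝ)).indicator 1 (u z.1) -
      φ z.2 * (Iic (0 : ℝ)).indicator 1 (u z.2)) ≤ 0 := by
    have h₁₂ := mul_nonneg (mul_nonneg h₁ (hφ0 z.2)) (indicator_nonneg (u z.2))
    have h₂₁ := mul_nonneg (mul_nonneg h₂ (hφ0 z.1)) (indicator_nonneg (u z.1))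
    linear_combination h₁₂ + h₂₁ + φ z.1 * mul_indicator h₁ + φ z.2 * mul_indicator h₂
  unfold fracPairIntegrand
  rw [mul_assoc]
  exact div_nonpos_of_nonpos_of_nonneg
    (mul_nonpos_of_nonneg_of_nonpos (by positivity) sub_mul_sub_nonpos) (by positivity)

lemma fracPairIntegrand_mul_indicator_ne_zero {x y : E} (hx : u x = 0) (hy : 0 < u y)
    (hφx : φ x ≠ 0) :
    fracPairIntegrand p α u (fun x => φ x * (Iic (0 : ℝ)).indicator 1 (u x)) (x, y) ≠ 0 := by
  have hxy : 0 < ‖x - y‖ := norm_sub_pos_iff.2 fun h => hy.ne' (h ▸ hx)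
  have := (Real.rpow_pos_of_pos hy (p - 2)).ne'
  have := (Real.rpow_pos_of_pos hxy α).ne'
  simp [fracPairIntegrand, hy.not_ge, abs_of_pos hy, hy.ne', *]

lemma tendsto_fracPairIntegrand_mul_cutoff (p α : ℝ) (u φ : E → ℝ) (z : E × E) :
    Tendsto (fun n => fracPairIntegrand p α u (fun x => φ x * cutoff n (u x)) z) atTop
      (nhds (fracPairIntegrand p α u (fun x => φ x * (Iic (0 : ℝ)).indicator 1 (u x)) z)) :=
  ((((tendsto_cutoff (u z.1)).const_mul (φ z.1)).sub
    ((tendsto_cutoff (u z.2)).const_mul (φ z.2))).const_mul _).div_const _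

variable [MeasurableSpace E] {μ : Measure E}

lemma ae_eq_zero_or_ae_pos_of_fracPairIntegrand_ae_eq_zero [SFinite μ] (hu0 : ∀ᵐ x ∂μ, 0 ≤ u x)
    (h : fracPairIntegrand p α u (fun x => φ x * (Iic (0 : ℝ)).indicator 1 (u x)) =ᵐ[μ.prod μ] 0) :
    (∀ᵐ x ∂μ, u x = 0) ∨ ∀ᵐ x ∂μ, φ x ≠ 0 → 0 < u x := by
  refine or_iff_not_imp_left.2 fun hu => ?_
  filter_upwards [Measure.ae_ae_of_ae_prod h, hu0] with x hx hux hφx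
  refine hux.lt_of_ne' fun hux' => hu ?_
  filter_upwards [hx, hu0] with y hy huy
  by_contra hy'
  exact fracPairIntegrand_mul_indicator_ne_zero hux' (huy.lt_of_ne' hy') hφx hy

variable [BorelSpace E] [SecondCountableTopology E]

lemma measurable_gagliardoIntegrand (hu : Measurable u) :
    Measurable (gagliardoIntegrand p α u) := by
  unfold gagliardoIntegrand
  fun_prop

lemma measurable_fracPairIntegrand (hu : Measurable u) (hv : Measurable v) :
    Measurable (fracPairIntegrand p α u v) := by
  unfold fracPairIntegrand
  fun_prop

lemma integrable_gagliardoIntegrand_mul (hp : 1 ≤ p) (hφ : Measurable φ) (hu : Measurable u)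
    {A B : ℝ} (hφA : ∀ x, |φ x| ≤ A) (huB : ∀ x, |u x| ≤ B)
    (hφi : Integrable (gagliardoIntegrand p α φ) (μ.prod μ))
    (hui : Integrable (gagliardoIntegrand p α u) (μ.prod μ)) :
    Integrable (gagliardoIntegrand p α (fun x => φ x * u x)) (μ.prod μ) := by
  refine (((hui.const_mul (A ^ p)).add (hφi.const_mul (B ^ p))).const_mul (2 ^ (p - 1))).mono'
    (measurable_gagliardoIntegrand (hφ.mul hu)).aestronglyMeasurable
    (Eventually.of_forall fun z => ?_)
  rw [Real.norm_of_nonneg (gagliardoIntegrand_nonneg _ _ _ _)]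
  exact gagliardoIntegrand_mul_le hp hφA huB z

lemma integrable_gagliardoIntegrand_comp_lipschitz (hp : 0 ≤ p) (hu : Measurable u) {h : ℝ → ℝ}
    {K : NNReal} (hh : LipschitzWith K h)
    (hui : Integrable (gagliardoIntegrand p α u) (μ.prod μ)) :
    Integrable (gagliardoIntegrand p α (fun x => h (u x))) (μ.prod μ) := by
  refine (hui.const_mul ((K : ℝ) ^ p)).mono'
    (measurable_gagliardoIntegrand (hh.continuous.measurable.comp hu)).aestronglyMeasurable
    (Eventually.of_forall fun z => ?_)
  rw [Real.norm_of_nonneg (gagliardoIntegrand_nonneg _ _ _ _)]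
  exact gagliardoIntegrand_comp_le hp hh z

lemma integrable_gagliardoIntegrand_mul_cutoff (hp : 1 ≤ p) (hφ : Measurable φ)
    (hu : Measurable u) {A : ℝ} (hφA : ∀ x, |φ x| ≤ A)
    (hφi : Integrable (gagliardoIntegrand p α φ) (μ.prod μ))
    (hui : Integrable (gagliardoIntegrand p α u) (μ.prod μ)) (n : ℕ) :
    Integrable (gagliardoIntegrand p α (fun x => φ x * cutoff n (u x))) (μ.prod μ) :=
  integrable_gagliardoIntegrand_mul hp hφ ((measurable_cutoff n).comp hu) hφA
    (fun x => abs_cutoff_le_one n (u x)) hφi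
    (integrable_gagliardoIntegrand_comp_lipschitz (by linarith) hu (lipschitzWith_cutoff n) hui)

lemma integrable_fracPairIntegrand (hp : 1 < p) (hu : Measurable u) (hv : Measurable v)
    (hui : Integrable (gagliardoIntegrand p α u) (μ.prod μ))
    (hvi : Integrable (gagliardoIntegrand p α v) (μ.prod μ)) :
    Integrable (fracPairIntegrand p α u v) (μ.prod μ) :=
  (hui.add hvi).mono' (measurable_fracPairIntegrand hu hv).aestronglyMeasurable
    (Eventually.of_forall (abs_fracPairIntegrand_le hp))

lemma fracPairIntegrand_mul_indicator_ae_eq_zero (hp : 1 < p) (hu : Measurable u)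
    (hu0 : ∀ᵐ x ∂μ, 0 ≤ u x) (hui : Integrable (gagliardoIntegrand p α u) (μ.prod μ))
    (hφ : Measurable φ) (hφ0 : ∀ x, 0 ≤ φ x) {A : ℝ} (hφA : ∀ x, |φ x| ≤ A)
    (hφi : Integrable (gagliardoIntegrand p α φ) (μ.prod μ)) {c : ℕ → ℝ}
    (hc : Tendsto c atTop (nhds 0))
    (hcu : ∀ n, c n ≤ ∫ z, fracPairIntegrand p α u (fun x => φ x * cutoff n (u x)) z ∂μ.prod μ) :
    fracPairIntegrand p α u (fun x => φ x * (Iic (0 : ℝ)).indicator 1 (u x)) =ᵐ[μ.prod μ] 0 := by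
  have hint (n : ℕ) :
      Integrable (fracPairIntegrand p α u (fun x => φ x * cutoff n (u x))) (μ.prod μ) :=
    integrable_fracPairIntegrand hp hu (hφ.mul ((measurable_cutoff n).comp hu)) hui
      (integrable_gagliardoIntegrand_mul_cutoff hp.le hφ hu hφA hφi hui n)
  have hlim := Eventually.of_forall (f := ae (μ.prod μ))
    (tendsto_fracPairIntegrand_mul_cutoff p α u φ)
  refine ae_eq_zero_of_tendsto_integral_norm hint hlim (tendsto_integral_norm_of_le_integral hint
    (integrable_fracPairIntegrand hp hu hφ hui hφi).abs (fun n => ?_) hlim ?_ hc hcu)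
  · exact Eventually.of_forall (fracPairIntegrand_mul_comp_le_of_antitone (antitone_cutoff n)
      (cutoff_nonneg n) (cutoff_le_one n) hφ0)
  · filter_upwards [Measure.quasiMeasurePreserving_fst.ae hu0,
      Measure.quasiMeasurePreserving_snd.ae hu0] with z h₁ h₂
    exact fracPairIntegrand_mul_indicator_nonpos hφ0 h₁ h₂

end Gagliardo

section LipschitzEnergy

lemma integrableOn_Ioi_min_one_rpow_div {p q : ℝ} (hq : 0 < q) (hqp : q < p) :
    IntegrableOn (fun t : ℝ => min t 1 ^ p / t ^ (1 + q)) (Ioi 0) := by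
  rw [← Ioc_union_Ioi_eq_Ioi zero_le_one]
  refine IntegrableOn.union ?_ ?_
  · have : IntegrableOn (fun t : ℝ => t ^ (p - (1 + q))) (Ioc 0 1) :=
      (intervalIntegrable_iff_integrableOn_Ioc_of_le zero_le_one).1
        (intervalIntegral.intervalIntegrable_rpow' (by linarith))
    refine this.congr_fun (fun t ht => ?_) measurableSet_Ioc
    simp only [min_eq_left ht.2, Real.rpow_sub ht.1]
  · have : IntegrableOn (fun t : ℝ => t ^ (-(1 + q))) (Ioi 1) :=
      integrableOn_Ioi_rpow_of_lt (by linarith) one_pos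
    refine this.congr_fun (fun t ht => ?_) measurableSet_Ioi
    have ht1 : 1 ≤ t := (mem_Ioi.1 ht).le
    simp only [min_eq_right ht1, Real.one_rpow, one_div, Real.rpow_neg (zero_le_one.trans ht1)]

variable {E : Type*} [NormedAddCommGroup E] [NormedSpace ℝ E] [FiniteDimensional ℝ E]
  [MeasurableSpace E] [BorelSpace E] {μ : Measure E} [μ.IsAddHaarMeasure] {p q : ℝ} {φ : E → ℝ}

lemma integrable_min_norm_one_rpow_div (hq : 0 < q) (hqp : q < p) :
    Integrable (fun h : E => min ‖h‖ 1 ^ p / ‖h‖ ^ (Module.finrank ℝ E + q)) μ := by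
  rcases subsingleton_or_nontrivial E with hE | hE
  · refine (integrable_zero E ℝ μ).congr (Eventually.of_forall fun h => ?_)
    simp [Subsingleton.elim h 0, Real.zero_rpow (hq.trans hqp).ne']
  · refine (integrable_fun_norm_addHaar μ (f := fun t => min t 1 ^ p /
      t ^ (Module.finrank ℝ E + q))).2 ?_
    refine (integrableOn_Ioi_min_one_rpow_div hq hqp).congr_fun (fun t ht => ?_) measurableSet_Ioi
    have hd : 1 ≤ Module.finrank ℝ E := Module.finrank_pos
    have rpow_split : t ^ (Module.finrank ℝ E + q) =
        t ^ (Module.finrank ℝ E - 1) * t ^ (1 + q) := by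
      rw [← Real.rpow_natCast, ← Real.rpow_add ht, Nat.cast_sub hd]
      congr 1
      push_cast
      ring
    rw [smul_eq_mul, rpow_split, mul_div_assoc', mul_div_mul_left _ _ (pow_pos ht _).ne']

lemma integrable_gagliardoIntegrand_of_lipschitz (hq : 0 < q) (hqp : q < p) {K : NNReal}
    (hφ : LipschitzWith K φ) (hφc : HasCompactSupport φ) :
    Integrable (gagliardoIntegrand p (Module.finrank ℝ E + q) φ) (μ.prod μ) := by
  have : ProperSpace E := FiniteDimensional.proper_real E
  obtain ⟨C, hC0, hC⟩ := exists_abs_sub_le_mul_min_norm_one hφ hφc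
  have indicator_integrable : Integrable ((tsupport φ).indicator (1 : E → ℝ)) μ :=
    (integrable_indicator_iff hφc.isCompact.measurableSet).2
      (integrableOn_const hφc.isCompact.measure_lt_top.ne)
  have snd_integrable := indicator_integrable.convolution_integrand (ContinuousLinearMap.mul ℝ ℝ)
    (integrable_min_norm_one_rpow_div (μ := μ) hq hqp)
  refine ((snd_integrable.swap.add snd_integrable).const_mul (C ^ p)).mono'
    (measurable_gagliardoIntegrand hφ.continuous.measurable).aestronglyMeasurable
    (Eventually.of_forall fun z => ?_)
  rw [Real.norm_of_nonneg (gagliardoIntegrand_nonneg _ _ _ _)]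
  simpa [norm_sub_rev z.2 z.1, add_mul] using
    gagliardoIntegrand_le_indicator_tsupport (hq.trans hqp) hC0 hC z

end LipschitzEnergy

section MaximumPrinciple

variable {N : ℕ} {s p : ℝ} {Ω : Set (EuclideanSpace ℝ (Fin N))}
  {V u v φ : EuclideanSpace ℝ (Fin N) → ℝ}

/-- `u` is a weak supersolution of `(-Δ)ₚˢ u + V u^{p-1} = 0` in `Ω`, tested against the nonnegative
elements of `W₀^{s,p}(Ω) ∩ L^∞_loc(Ω)`. -/
def IsWeakSupersolution (N : ℕ) (s p : ℝ) (Ω : Set (EuclideanSpace ℝ (Fin N)))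
    (V u : EuclideanSpace ℝ (Fin N) → ℝ) : Prop :=
  ∀ v : EuclideanSpace ℝ (Fin N) → ℝ, memW0 N s p Ω v →
    (∀ K : Set (EuclideanSpace ℝ (Fin N)), K ⊆ Ω → IsCompact K → ∃ M : ℝ, ∀ x ∈ K, |v x| ≤ M) →
    (∀ x, 0 ≤ v x) →
    0 ≤ fracPair N s p u v + ∫ x in Ω, V x * u x ^ (p - 1) * v x

lemma fracPair_eq_integral_fracPairIntegrand (hp : 1 < p) (hu : memW0 N s p Ω u)
    (hv : memW0 N s p Ω v) : fracPair N s p u v = ∫ z, fracPairIntegrand p (N + s * p) u v z :=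
  (integral_prod _ (integrable_fracPairIntegrand hp hu.1 hv.1 hu.2.1 hv.2.1)).symm

lemma memW0_of_lipschitz (hs0 : 0 < s) (hs1 : s < 1) (hp : 0 < p) {K : NNReal}
    (hφ : LipschitzWith K φ) (hφc : HasCompactSupport φ) (hφΩ : tsupport φ ⊆ Ω) :
    memW0 N s p Ω φ := by
  have hint := integrable_gagliardoIntegrand_of_lipschitz (μ := volume) (mul_pos hs0 hp)
    (mul_lt_of_lt_one_left hp hs1) hφ hφc
  rw [finrank_euclideanSpace_fin] at hint
  exact ⟨hφ.continuous.measurable, hint,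
    fun x hx => image_eq_zero_of_notMem_tsupport fun h => hx (hφΩ h)⟩

lemma memW0_mul_cutoff (hp : 1 ≤ p) (hu : memW0 N s p Ω u) (hφ : memW0 N s p Ω φ) {A : ℝ}
    (hφA : ∀ x, |φ x| ≤ A) (n : ℕ) : memW0 N s p Ω (fun x => φ x * cutoff n (u x)) :=
  ⟨hφ.1.mul ((measurable_cutoff n).comp hu.1),
    integrable_gagliardoIntegrand_mul_cutoff hp hφ.1 hu.1 hφA hφ.2.1 hu.2.1 n,
    fun x hx => mul_eq_zero_of_left (hφ.2.2 x hx) _⟩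

lemma neg_integral_le_integral_fracPairIntegrand_mul_cutoff (hp : 1 < p) (hu : memW0 N s p Ω u)
    (hsuper : IsWeakSupersolution N s p Ω V u) (hφ : memW0 N s p Ω φ) (hφ0 : ∀ x, 0 ≤ φ x)
    {A : ℝ} (hφA : ∀ x, |φ x| ≤ A) (n : ℕ) :
    -∫ x in Ω, V x * u x ^ (p - 1) * φ x * cutoff n (u x) ≤
      ∫ z, fracPairIntegrand p (N + s * p) u (fun x => φ x * cutoff n (u x)) z := by
  have hv := memW0_mul_cutoff hp.le hu hφ hφA n
  have abs_le (x : EuclideanSpace ℝ (Fin N)) : |φ x * cutoff n (u x)| ≤ A := by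
    rw [abs_mul]
    exact (mul_le_of_le_one_right (abs_nonneg _) (abs_cutoff_le_one n _)).trans (hφA x)
  have tested := hsuper _ hv (fun _ _ _ => ⟨A, fun x _ => abs_le x⟩)
    (fun x => mul_nonneg (hφ0 x) (cutoff_nonneg n _))
  rw [fracPair_eq_integral_fracPairIntegrand hp hu hv] at tested
  simp only [← mul_assoc] at tested
  linarith

lemma ae_eq_zero_or_ae_pos_of_isWeakSupersolution (hs0 : 0 < s) (hs1 : s < 1) (hp : 1 < p)
    (hu : memW0 N s p Ω u) (hu0 : ∀ᵐ x, 0 ≤ u x)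
    (hVu : LocallyIntegrableOn (fun x => V x * u x ^ (p - 1)) Ω)
    (hsuper : IsWeakSupersolution N s p Ω V u) {K : NNReal} (hφ : LipschitzWith K φ)
    (hφ0 : ∀ x, 0 ≤ φ x) (hφc : HasCompactSupport φ) (hφΩ : tsupport φ ⊆ Ω) :
    (∀ᵐ x, u x = 0) ∨ ∀ᵐ x, φ x ≠ 0 → 0 < u x := by
  obtain ⟨A, hA⟩ := hφc.exists_bound_of_continuous hφ.continuous
  have hφW : memW0 N s p Ω φ := memW0_of_lipschitz hs0 hs1 (by linarith) hφ hφc hφΩ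
  have potential_tendsto : Tendsto
      (fun n => -∫ x in Ω, V x * u x ^ (p - 1) * φ x * cutoff n (u x)) atTop (nhds 0) := by
    rw [← neg_zero]
    refine (tendsto_integral_mul_cutoff hu.1.aemeasurable (ae_restrict_of_ae hu0)
      (integrable_mul_of_locallyIntegrableOn hVu hφ.continuous hφc hφΩ).restrict
      fun x hx => ?_).neg
    simp [hx, Real.zero_rpow (sub_pos.2 hp).ne']
  exact ae_eq_zero_or_ae_pos_of_fracPairIntegrand_ae_eq_zero hu0 <|
    fracPairIntegrand_mul_indicator_ae_eq_zero hp hu.1 hu0 hu.2.1 hφW.1 hφ0 hA hφW.2.1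
      potential_tendsto
      (neg_integral_le_integral_fracPairIntegrand_mul_cutoff hp hu hsuper hφW hφ0 hA)

lemma exists_lipschitzWith_tsupport_subset {E : Type*} [NormedAddCommGroup E] [NormedSpace ℝ E]
    [FiniteDimensional ℝ E] {s : Set E} {x : E} (hs : s ∈ nhds x) :
    ∃ (φ : E → ℝ) (K : NNReal), LipschitzWith K φ ∧ (∀ y, 0 ≤ φ y) ∧ HasCompactSupport φ ∧
      tsupport φ ⊆ s ∧ φ x ≠ 0 := by
  obtain ⟨φ, hφs, hφc, hφ, hφ01, hφx⟩ := exists_contDiff_tsupport_subset (n := 1) hs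
  obtain ⟨K, hK⟩ := hφ.lipschitzWith_of_hasCompactSupport hφc one_ne_zero
  exact ⟨φ, K, hK, fun y => (hφ01 (mem_range_self y)).1, hφc, hφs, hφx ▸ one_ne_zero⟩

theorem stmt9_general (N : ℕ) (Ω : Set (EuclideanSpace ℝ (Fin N))) (hΩo : IsOpen Ω)
    (s p : ℝ) (hs0 : 0 < s) (hs1 : s < 1) (hp : 1 < p) (V u : EuclideanSpace ℝ (Fin N) → ℝ)
    (hu : memW0 N s p Ω u) (hu0 : ∀ᵐ x ∂volume.restrict Ω, 0 ≤ u x)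
    (hunt : ¬ (∀ᵐ x ∂volume.restrict Ω, u x = 0))
    (hVu : LocallyIntegrableOn (fun x => V x * u x ^ (p - 1)) Ω)
    (hsuper : IsWeakSupersolution N s p Ω V u) :
    ∀ᵐ x ∂volume.restrict Ω, 0 < u x := by
  have hu0' : ∀ᵐ x, 0 ≤ u x := by
    filter_upwards [(ae_restrict_iff' hΩo.measurableSet).1 hu0] with x hx
    by_cases hxΩ : x ∈ Ω
    exacts [hx hxΩ, (hu.2.2 x hxΩ).ge]
  rw [ae_restrict_iff' hΩo.measurableSet, ae_iff]
  refine measure_null_of_locally_null _ fun x hx => ?_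
  have hxΩ : x ∈ Ω := (Classical.not_imp.1 hx).1
  obtain ⟨φ, K, hφ, hφ0, hφc, hφΩ, hφx⟩ := exists_lipschitzWith_tsupport_subset (hΩo.mem_nhds hxΩ)
  have hpos : ∀ᵐ y, φ y ≠ 0 → 0 < u y :=
    (ae_eq_zero_or_ae_pos_of_isWeakSupersolution hs0 hs1 hp hu hu0' hVu hsuper hφ hφ0 hφc
      hφΩ).resolve_left fun h => hunt (ae_restrict_of_ae h)
  refine ⟨{y | φ y ≠ 0} ∩ {y | ¬(y ∈ Ω → 0 < u y)}, inter_mem (mem_nhdsWithin_of_mem_nhds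
    (hφ.continuous.continuousAt.eventually_ne hφx)) self_mem_nhdsWithin, ?_⟩
  exact measure_mono_null (t := {y | ¬(φ y ≠ 0 → 0 < u y)}) (fun y hy h => hy.2 fun _ => h hy.1)
    (ae_iff.1 hpos)

end MaximumPrinciple

/-- strong maximum principle: if `V ∈ L¹_loc(Ω)`, `u ∈ W₀^{s,p}(Ω)` is
nonnegative and nontrivial, `V u^{p-1} ∈ L¹_loc(Ω)`, and for every nonnegative
`v ∈ W₀^{s,p}(Ω) ∩ L^∞_loc(Ω)` one has `⟨A u, v⟩ + ∫_Ω V u^{p-1} v ≥ 0`,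
then `u > 0` a.e. in `Ω`. -/
theorem stmt9 (N : ℕ) (Ω : Set (EuclideanSpace ℝ (Fin N)))
    (hΩo : IsOpen Ω) (hΩc : IsConnected Ω) (hΩb : Bornology.IsBounded Ω)
    (s p : ℝ) (hs0 : 0 < s) (hs1 : s < 1) (hp : 1 < p)
    (V : EuclideanSpace ℝ (Fin N) → ℝ) (hV : LocallyIntegrableOn V Ω)
    (u : EuclideanSpace ℝ (Fin N) → ℝ) (hu : memW0 N s p Ω u)
    (hu0 : ∀ᵐ x ∂volume.restrict Ω, 0 ≤ u x)
    (hunt : ¬ (∀ᵐ x ∂volume.restrict Ω, u x = 0))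
    (hVu : LocallyIntegrableOn (fun x => V x * u x ^ (p - 1)) Ω)
    (hsuper : ∀ v : EuclideanSpace ℝ (Fin N) → ℝ, memW0 N s p Ω v →
      (∀ K : Set (EuclideanSpace ℝ (Fin N)), K ⊆ Ω → IsCompact K →
        ∃ M : ℝ, ∀ x ∈ K, |v x| ≤ M) →
      (∀ x, 0 ≤ v x) →
      0 ≤ fracPair N s p u v + ∫ x in Ω, V x * u x ^ (p - 1) * v x) :
    ∀ᵐ x ∂volume.restrict Ω, 0 < u x :=
  stmt9_general N Ω hΩo s p hs0 hs1 hp V u hu hu0 hunt hVu hsuper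

end
end

section
/- Let h ∈ W̃_p with |{h > 0}| > 0. If u is an eigenfunction of the fractional p-Laplacian eigenvalue problem (-Δ)ₚˢ u = λ h |u|^(p-2) u (with zero exterior condition) associated with an eigenvalue λ > λ₁, then u changes sign: both u₊ ≢ 0 and u₋ ≢ 0. -/
open MeasureTheory Metric Set Filter

noncomputable section

/-!
Suppose the eigenfunction `u` has one sign; replacing `u` by `-u` and changing it on a null set, we
may take `u ≥ 0` everywhere. For bounded `w ≥ 0` in `W₀^{s,p}(Ω)`, test the equation with
`w ^ p / (u + ε) ^ (p - 1)`. The discrete Picone inequality bounds the pairing pointwise by the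
energy density of `w`, and letting `ε → 0` gives `λ ∫_{u ≠ 0} h w ^ p ≤ ‖w‖ ^ p`. No maximum
principle is needed to see that `w` vanishes a.e. on `{u = 0}`: the Picone gap has bounded
integral, while at `(x, y)` with `u x = 0 < u y` and `w x ≠ 0` it blows up like `ε ^ (1 - p)`.
Truncating a general `φ` then yields `λ ∫ h |φ| ^ p ≤ ‖φ‖ ^ p`, hence `λ ≤ λ₁`.
-/

section

open scoped Topology NNReal

section RealPowers

variable {p a b c d k x y ε : ℝ}

lemma abs_rpow_sub_two_mul_of_pos (hx : 0 < x) : |x| ^ (p - 2) * x = x ^ (p - 1) := by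
  rw [abs_of_pos hx, ← Real.rpow_add_one hx.ne']
  ring_nf

lemma abs_neg_rpow_sub_two_mul_neg (p x : ℝ) : |-x| ^ (p - 2) * (-x) = -(|x| ^ (p - 2) * x) := by
  rw [abs_neg, mul_neg]

lemma abs_abs_rpow_sub_two_mul (hp : p ≠ 1) (x : ℝ) : |(|x| ^ (p - 2) * x)| = |x| ^ (p - 1) := by
  have hp' : p - 2 + 1 ≠ 0 := by contrapose! hp; linarith
  rw [abs_mul, abs_of_nonneg (Real.rpow_nonneg (abs_nonneg x) _),
    ← Real.rpow_add_one' (abs_nonneg x) hp']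
  ring_nf

lemma abs_rpow_sub_two_mul_mul_self (hp : p ≠ 0) (x : ℝ) : |x| ^ (p - 2) * x * x = |x| ^ p := by
  have hp' : p - 2 + 2 ≠ 0 := by simpa using hp
  rw [mul_assoc, ← abs_mul_abs_self x, ← pow_two, ← Real.rpow_two,
    ← Real.rpow_add' (abs_nonneg x) hp', sub_add_cancel]

lemma max_rpow_le_add (ha : 0 ≤ a) (hb : 0 ≤ b) : max a b ^ p ≤ a ^ p + b ^ p := by
  have := Real.rpow_nonneg ha p
  have := Real.rpow_nonneg hb p
  rcases max_choice a b with h | h <;> rw [h] <;> linarith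

lemma rpow_sub_one_mul_le_add (hp : 1 ≤ p) (ha : 0 ≤ a) (hb : 0 ≤ b) :
    a ^ (p - 1) * b ≤ a ^ p + b ^ p := by
  have hmax : 0 ≤ max a b := ha.trans (le_max_left a b)
  calc a ^ (p - 1) * b ≤ max a b ^ (p - 1) * max a b := by
        have : 0 ≤ p - 1 := by linarith
        gcongr
        exacts [le_max_left a b, le_max_right a b]
    _ = max a b ^ p := by
        rw [← Real.rpow_add_one' hmax (by linarith), sub_add_cancel]
    _ ≤ a ^ p + b ^ p := max_rpow_le_add ha hb

lemma rpow_div_rpow_sub_one (hx : 0 ≤ x) (ha : 0 < a) :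
    x ^ p / a ^ (p - 1) = a * (x / a) ^ p := by
  rw [Real.div_rpow hx ha.le, Real.rpow_sub_one ha.ne']
  field_simp

lemma add_rpow_div_add_rpow_sub_one_le (hp : 1 ≤ p) (hx : 0 ≤ x) (hy : 0 ≤ y) (ha : 0 < a)
    (hb : 0 < b) :
    (x + y) ^ p / (a + b) ^ (p - 1) ≤ x ^ p / a ^ (p - 1) + y ^ p / b ^ (p - 1) := by
  have hab : 0 < a + b := add_pos ha hb
  have convex := (convexOn_rpow hp).2 (mem_Ici.2 (div_nonneg hx ha.le))
    (mem_Ici.2 (div_nonneg hy hb.le)) (div_nonneg ha.le hab.le) (div_nonneg hb.le hab.le)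
    (by field_simp)
  have mean : a / (a + b) * (x / a) + b / (a + b) * (y / b) = (x + y) / (a + b) := by field_simp
  simp only [smul_eq_mul, mean] at convex
  rw [rpow_div_rpow_sub_one (add_nonneg hx hy) hab, rpow_div_rpow_sub_one hx ha,
    rpow_div_rpow_sub_one hy hb]
  calc (a + b) * ((x + y) / (a + b)) ^ p
      ≤ (a + b) * (a / (a + b) * (x / a) ^ p + b / (a + b) * (y / b) ^ p) := by gcongr
    _ = a * (x / a) ^ p + b * (y / b) ^ p := by field_simp

lemma discrete_picone_of_lt (hp : 1 ≤ p) (hb : 0 < b) (hba : b < a) (hc : 0 ≤ c) (hd : 0 ≤ d) :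
    (a - b) ^ (p - 1) * (c ^ p / a ^ (p - 1) - d ^ p / b ^ (p - 1)) ≤ |c - d| ^ p := by
  have hab : 0 < (a - b) ^ (p - 1) := Real.rpow_pos_of_pos (sub_pos.2 hba) _
  rcases le_total c d with hcd | hdc
  · have hquot : c ^ p / a ^ (p - 1) ≤ d ^ p / b ^ (p - 1) := by
      have : 0 ≤ p - 1 := by linarith
      gcongr
    calc (a - b) ^ (p - 1) * (c ^ p / a ^ (p - 1) - d ^ p / b ^ (p - 1)) ≤ 0 :=
          mul_nonpos_of_nonneg_of_nonpos hab.le (sub_nonpos.2 hquot)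
      _ ≤ |c - d| ^ p := Real.rpow_nonneg (abs_nonneg _) _
  · have radon := add_rpow_div_add_rpow_sub_one_le hp (sub_nonneg.2 hdc) hd (sub_pos.2 hba) hb
    rw [sub_add_cancel, sub_add_cancel] at radon
    rw [abs_of_nonneg (sub_nonneg.2 hdc), mul_comm, ← le_div_iff₀ hab]
    linarith

lemma discrete_picone (hp : 1 ≤ p) (ha : 0 < a) (hb : 0 < b) (hc : 0 ≤ c) (hd : 0 ≤ d) :
    |a - b| ^ (p - 2) * (a - b) * (c ^ p / a ^ (p - 1) - d ^ p / b ^ (p - 1)) ≤ |c - d| ^ p := by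
  rcases lt_trichotomy b a with hba | rfl | hab
  · rw [abs_rpow_sub_two_mul_of_pos (sub_pos.2 hba)]
    exact discrete_picone_of_lt hp hb hba hc hd
  · rw [sub_self, mul_zero, zero_mul]
    exact Real.rpow_nonneg (abs_nonneg _) _
  · rw [← neg_sub b a, abs_neg_rpow_sub_two_mul_neg, abs_rpow_sub_two_mul_of_pos (sub_pos.2 hab),
      neg_mul, ← mul_neg, neg_sub, abs_sub_comm]
    exact discrete_picone_of_lt hp ha hab hd hc

lemma abs_rpow_sub_rpow_le (hp : 1 ≤ p) (ha : a ∈ Icc 0 k) (hb : b ∈ Icc 0 k) :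
    |a ^ p - b ^ p| ≤ p * k ^ (p - 1) * |a - b| := by
  refine (convex_Icc 0 k).norm_image_sub_le_of_norm_hasDerivWithin_le (f := fun x : ℝ ↦ x ^ p)
    (fun x _ ↦ (Real.hasDerivAt_rpow_const (Or.inr hp)).hasDerivWithinAt) (fun x hx ↦ ?_) hb ha
  rw [Real.norm_of_nonneg (mul_nonneg (by linarith) (Real.rpow_nonneg hx.1 _))]
  have : 0 ≤ p - 1 := by linarith
  gcongr
  exacts [hx.1, hx.2]

lemma abs_rpow_neg_sub_rpow_neg_le {q : ℝ} (hq : 0 ≤ q) (hε : 0 < ε) (ha : ε ≤ a) (hb : ε ≤ b) :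
    |a ^ (-q) - b ^ (-q)| ≤ q * ε ^ (-q - 1) * |a - b| := by
  refine (convex_Ici ε).norm_image_sub_le_of_norm_hasDerivWithin_le (f := fun x : ℝ ↦ x ^ (-q))
    (fun x hx ↦ (Real.hasDerivAt_rpow_const
      (Or.inl (hε.trans_le hx).ne')).hasDerivWithinAt) (fun x hx ↦ ?_) hb ha
  rw [norm_mul, norm_neg, Real.norm_of_nonneg hq,
    Real.norm_of_nonneg (Real.rpow_nonneg (hε.le.trans hx) _)]
  exact mul_le_mul_of_nonneg_left (Real.rpow_le_rpow_of_nonpos hε hx (by linarith)) hq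

lemma abs_mul_sub_mul_le {A B : ℝ} (ha : |c| ≤ A) (hb : |b| ≤ B) :
    |a * b - c * d| ≤ |a - c| * B + A * |b - d| :=
  calc |a * b - c * d| = |(a - c) * b + c * (b - d)| := by ring_nf
    _ ≤ |a - c| * |b| + |c| * |b - d| := by
        simpa only [abs_mul] using abs_add_le ((a - c) * b) (c * (b - d))
    _ ≤ |a - c| * B + A * |b - d| := by gcongr

lemma abs_rpow_div_rpow_sub_le (hp : 1 ≤ p) (hε : 0 < ε) (ha : ε ≤ a) (hb : ε ≤ b)
    (hc : c ∈ Icc 0 k) (hd : d ∈ Icc 0 k) :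
    |c ^ p / a ^ (p - 1) - d ^ p / b ^ (p - 1)| ≤
      (p * k ^ (p - 1) * ε ^ (-(p - 1)) + k ^ p * ((p - 1) * ε ^ (-(p - 1) - 1))) *
        max |c - d| |a - b| := by
  have hp1 : 0 ≤ p - 1 := by linarith
  have hk : 0 ≤ k := hc.1.trans hc.2
  have hd' : |d ^ p| ≤ k ^ p := by
    rw [abs_of_nonneg (Real.rpow_nonneg hd.1 _)]
    exact Real.rpow_le_rpow hd.1 hd.2 (by linarith)
  have ha' : |a ^ (-(p - 1))| ≤ ε ^ (-(p - 1)) := by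
    rw [abs_of_nonneg (Real.rpow_nonneg (hε.le.trans ha) _)]
    exact Real.rpow_le_rpow_of_nonpos hε ha (neg_nonpos.2 hp1)
  rw [div_eq_mul_inv, div_eq_mul_inv, ← Real.rpow_neg (hε.le.trans ha),
    ← Real.rpow_neg (hε.le.trans hb)]
  calc |c ^ p * a ^ (-(p - 1)) - d ^ p * b ^ (-(p - 1))|
      ≤ |c ^ p - d ^ p| * ε ^ (-(p - 1)) + k ^ p * |a ^ (-(p - 1)) - b ^ (-(p - 1))| :=
        abs_mul_sub_mul_le hd' ha'
    _ ≤ p * k ^ (p - 1) * max |c - d| |a - b| * ε ^ (-(p - 1)) +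
          k ^ p * ((p - 1) * ε ^ (-(p - 1) - 1) * max |c - d| |a - b|) := by
        gcongr
        · exact (abs_rpow_sub_rpow_le hp hc hd).trans (by gcongr; exact le_max_left _ _)
        · exact (abs_rpow_neg_sub_rpow_neg_le hp1 hε ha hb).trans
            (by gcongr; exact le_max_right _ _)
    _ = _ := by ring

lemma tendsto_rpow_sub_one_nhdsGT_zero (hp : 1 < p) :
    Tendsto (fun ε : ℝ ↦ ε ^ (p - 1)) (𝓝[>] 0) (𝓝 0) := by
  have hp1 : 0 < p - 1 := by linarith
  exact (Real.continuous_rpow_const hp1.le).tendsto' 0 0 (Real.zero_rpow hp1.ne')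
    |>.mono_left inf_le_left

end RealPowers

section MeasureTheory

variable {α : Type*} [MeasurableSpace α] {μ : Measure α}

lemma ae_eq_zero_of_tendsto_of_tendsto_integral_zero {ι : Type*} {l : Filter ι} [l.NeBot]
    [l.IsCountablyGenerated] {F : ι → α → ℝ} (hF_meas : ∀ i, AEStronglyMeasurable (F i) μ)
    (hF_int : ∀ᶠ i in l, Integrable (F i) μ) (hF_nonneg : ∀ᶠ i in l, 0 ≤ᵐ[μ] F i)
    (hF : Tendsto (fun i ↦ ∫ x, F i x ∂μ) l (𝓝 0)) :
    ∀ᵐ x ∂μ, ∀ c, Tendsto (fun i ↦ F i x) l (𝓝 c) → c = 0 := by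
  have hnorm : Tendsto (fun i ↦ eLpNorm (F i - 0) 1 μ) l (𝓝 0) := by
    rw [← ENNReal.ofReal_zero]
    refine (ENNReal.tendsto_ofReal hF).congr' ?_
    filter_upwards [hF_int, hF_nonneg] with i hint hnonneg
    rw [sub_zero, eLpNorm_one_eq_lintegral_enorm, ofReal_integral_eq_lintegral_ofReal hint hnonneg]
    refine lintegral_congr_ae ?_
    filter_upwards [hnonneg] with x hx using (Real.enorm_of_nonneg hx).symm
  obtain ⟨i, hi, hae⟩ := (tendstoInMeasure_of_tendsto_eLpNorm one_ne_zero hF_meas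
    aestronglyMeasurable_zero hnorm).exists_seq_tendsto_ae'
  filter_upwards [hae] with x hx c hc
  exact tendsto_nhds_unique (hc.comp hi) hx

lemma setIntegral_pos_of_subsingleton [Subsingleton α] {S : Set α} (hS : μ S ≠ 0) (hS' : μ S ≠ ⊤)
    {f : α → ℝ} {x : α} (hx : 0 < f x) : 0 < ∫ y in S, f y ∂μ := by
  have hf : f = fun _ ↦ f x := funext fun y ↦ congrArg f (Subsingleton.elim y x)
  rw [hf, setIntegral_const, smul_eq_mul]
  exact mul_pos (ENNReal.toReal_pos hS hS') hx

lemma measure_compl_ne_zero_of_ne_top (hμ : μ univ = ⊤) {S : Set α} (hS : μ S ≠ ⊤) :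
    μ Sᶜ ≠ 0 := by
  intro hzero
  have := measure_univ_le_add_compl (μ := μ) S
  rw [hμ, hzero, add_zero, top_le_iff] at this
  exact hS this

end MeasureTheory

section PiconeTest

variable {α : Type*} {p k ε : ℝ} {u w : α → ℝ}

/-- The test function `w ^ p / (u + ε) ^ (p - 1)` of Picone's inequality; the shift by `ε` keeps it
finite where `u` vanishes. -/
def piconeTest (p : ℝ) (u w : α → ℝ) (ε : ℝ) (x : α) : ℝ :=
  w x ^ p / (u x + ε) ^ (p - 1)

lemma measurable_piconeTest [MeasurableSpace α] (hu : Measurable u) (hw : Measurable w) :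
    Measurable (piconeTest p u w ε) := by
  unfold piconeTest
  fun_prop

lemma abs_rpow_mul_piconeTest (hp : 1 < p) (hε : 0 < ε) {x : α} (hx : 0 ≤ u x) :
    |u x| ^ (p - 2) * u x * piconeTest p u w ε x = w x ^ p * (u x / (u x + ε)) ^ (p - 1) := by
  rcases hx.eq_or_lt with hx | hx
  · rw [← hx, mul_zero, zero_mul, zero_div, Real.zero_rpow (by linarith), mul_zero]
  · rw [abs_rpow_sub_two_mul_of_pos hx, piconeTest, Real.div_rpow hx.le (by linarith)]
    ring

lemma tendsto_integral_mul_piconeTest [MeasurableSpace α] {μ : Measure α} {h : α → ℝ} (hp : 1 < p)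
    (hu : Measurable u) (hu0 : 0 ≤ u) (hint : Integrable (fun x ↦ h x * w x ^ p) μ) :
    Tendsto (fun ε ↦ ∫ x, h x * |u x| ^ (p - 2) * u x * piconeTest p u w ε x ∂μ) (𝓝[>] 0)
      (𝓝 (∫ x in {x | u x ≠ 0}, h x * w x ^ p ∂μ)) := by
  have hp1 : 0 < p - 1 := by linarith
  have hrw : ∀ᶠ ε : ℝ in 𝓝[>] 0,
      ∫ x, h x * w x ^ p * (u x / (u x + ε)) ^ (p - 1) ∂μ =
        ∫ x, h x * |u x| ^ (p - 2) * u x * piconeTest p u w ε x ∂μ := by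
    filter_upwards [self_mem_nhdsWithin] with ε hε
    congr! 2 with x
    rw [mul_assoc, ← abs_rpow_mul_piconeTest hp hε (hu0 x)]
    ring
  have hsupp : MeasurableSet {x | u x ≠ 0} := hu (measurableSet_singleton 0).compl
  rw [← integral_indicator hsupp]
  refine Tendsto.congr' hrw (tendsto_integral_filter_of_dominated_convergence
    (fun x ↦ ‖h x * w x ^ p‖) ?_ ?_ hint.norm ?_)
  · filter_upwards with ε
    exact hint.1.mul ((hu.div (hu.add_const ε)).pow_const _).aestronglyMeasurable
  · filter_upwards [self_mem_nhdsWithin] with ε (hε : 0 < ε)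
    filter_upwards with x
    have hx : 0 ≤ u x := hu0 x
    have hratio : u x / (u x + ε) ≤ 1 := div_le_one_of_le₀ (by linarith) (by linarith)
    rw [norm_mul, Real.norm_of_nonneg (r := (u x / (u x + ε)) ^ (p - 1)) (by positivity)]
    exact mul_le_of_le_one_right (norm_nonneg _) (Real.rpow_le_one (by positivity) hratio hp1.le)
  · filter_upwards with x
    rcases (hu0 x).eq_or_lt with hx | (hx : 0 < u x)
    · have hx : u x = 0 := hx.symm
      simp [hx, Real.zero_rpow hp1.ne']
    · have hshift : Tendsto (fun ε ↦ u x + ε) (𝓝[>] 0) (𝓝 (u x)) :=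
        (continuous_const.add continuous_id).tendsto' 0 _ (add_zero _) |>.mono_left inf_le_left
      have hratio := (tendsto_const_nhds (x := u x)).div hshift hx.ne'
      replace hratio := hratio.rpow_const (p := p - 1) (Or.inr hp1.le)
      rw [div_self hx.ne', Real.one_rpow] at hratio
      simpa [hx.ne'] using hratio.const_mul (h x * w x ^ p)

end PiconeTest

section Truncation

variable {α : Type*} [MeasurableSpace α] {μ : Measure α} {p : ℝ} {h w φ : α → ℝ}

lemma integrable_mul_rpow_of_le (hp : 0 < p) (hφ : Measurable φ) (hw : Measurable w)
    (hw0 : 0 ≤ w) (hwφ : w ≤ φ) (hint : Integrable (fun x ↦ h x * φ x ^ p) μ) :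
    Integrable (fun x ↦ h x * w x ^ p) μ := by
  have hfactor : (fun x ↦ h x * w x ^ p) = fun x ↦ h x * φ x ^ p * (w x / φ x) ^ p := by
    ext x
    have hφ0 : 0 ≤ φ x := (hw0 x).trans (hwφ x)
    rw [mul_assoc, ← Real.mul_rpow hφ0 (div_nonneg (hw0 x) hφ0)]
    rcases hφ0.eq_or_lt with hzero | hpos
    · rw [le_antisymm ((hwφ x).trans_eq hzero.symm) (hw0 x), ← hzero, zero_mul]
    · rw [mul_div_cancel₀ _ hpos.ne']
  rw [hfactor]
  refine hint.mul_bdd (c := 1) ((hw.div hφ).pow_const p).aestronglyMeasurable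
    (Eventually.of_forall fun x ↦ ?_)
  have hφ0 : 0 ≤ φ x := (hw0 x).trans (hwφ x)
  have hratio : 0 ≤ w x / φ x := div_nonneg (hw0 x) hφ0
  rw [Real.norm_of_nonneg (Real.rpow_nonneg hratio p)]
  exact Real.rpow_le_one hratio (div_le_one_of_le₀ (hwφ x) hφ0) hp.le

lemma tendsto_integral_mul_min_rpow (hp : 0 < p) (hφ : Measurable φ) (hφ0 : 0 ≤ φ)
    (hint : Integrable (fun x ↦ h x * φ x ^ p) μ) :
    Tendsto (fun n : ℕ ↦ ∫ x, h x * min (φ x) n ^ p ∂μ) atTop (𝓝 (∫ x, h x * φ x ^ p ∂μ)) := by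
  have hmin0 (n : ℕ) (x : α) : 0 ≤ min (φ x) n := le_min (hφ0 x) n.cast_nonneg
  refine tendsto_integral_of_dominated_convergence (fun x ↦ ‖h x * φ x ^ p‖)
    (fun n ↦ (integrable_mul_rpow_of_le hp hφ (hφ.min measurable_const) (hmin0 n)
      (fun x ↦ min_le_left _ _) hint).1) hint.norm
    (fun n ↦ Eventually.of_forall fun x ↦ ?_) (Eventually.of_forall fun x ↦ ?_)
  · rw [norm_mul, norm_mul, Real.norm_of_nonneg (Real.rpow_nonneg (hmin0 n x) p),
      Real.norm_of_nonneg (Real.rpow_nonneg (hφ0 x) p)]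
    gcongr
    exacts [hmin0 n x, min_le_left _ _]
  · obtain ⟨m, hm⟩ := exists_nat_ge (φ x)
    refine tendsto_const_nhds.congr' ?_
    filter_upwards [eventually_ge_atTop m] with n hn
    rw [min_eq_left (hm.trans (Nat.cast_le.2 hn))]

end Truncation

variable {N : ℕ} {s p : ℝ} {Ω : Set (EuclideanSpace ℝ (Fin N))}
  {h u v w φ : EuclideanSpace ℝ (Fin N) → ℝ} {lam k ε : ℝ}

section Energy

/-- The integrand of the Gagliardo energy `gagE`, as a function on the product space. -/
def gagDensity (N : ℕ) (s p : ℝ) (u : EuclideanSpace ℝ (Fin N) → ℝ)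
    (z : EuclideanSpace ℝ (Fin N) × EuclideanSpace ℝ (Fin N)) : ℝ :=
  |u z.1 - u z.2| ^ p / ‖z.1 - z.2‖ ^ ((N : ℝ) + s * p)

/-- The integrand of the pairing `fracPair`, as a function on the product space. -/
def fracPairDensity (N : ℕ) (s p : ℝ) (u v : EuclideanSpace ℝ (Fin N) → ℝ)
    (z : EuclideanSpace ℝ (Fin N) × EuclideanSpace ℝ (Fin N)) : ℝ :=
  |u z.1 - u z.2| ^ (p - 2) * (u z.1 - u z.2) * (v z.1 - v z.2) /
    ‖z.1 - z.2‖ ^ ((N : ℝ) + s * p)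

lemma gagDensity_nonneg (z) : 0 ≤ gagDensity N s p u z := by
  unfold gagDensity
  positivity

lemma measurable_gagDensity (hu : Measurable u) : Measurable (gagDensity N s p u) := by
  unfold gagDensity
  fun_prop

lemma measurable_fracPairDensity (hu : Measurable u) (hv : Measurable v) :
    Measurable (fracPairDensity N s p u v) := by
  unfold fracPairDensity
  fun_prop

lemma gagE_nonneg (u : EuclideanSpace ℝ (Fin N) → ℝ) : 0 ≤ gagE N s p u :=
  integral_nonneg fun x ↦ integral_nonneg fun y ↦ gagDensity_nonneg (x, y)

lemma memW0.integrable_gagDensity (hu : memW0 N s p Ω u) : Integrable (gagDensity N s p u) :=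
  hu.2.1

lemma memW0.gagE_eq_integral (hu : memW0 N s p Ω u) :
    gagE N s p u = ∫ z, gagDensity N s p u z :=
  (integral_prod _ hu.integrable_gagDensity).symm

lemma memW0.integrable_fracPairDensity (hp : 1 < p) (hu : memW0 N s p Ω u)
    (hv : memW0 N s p Ω v) : Integrable (fracPairDensity N s p u v) := by
  refine Integrable.mono' (hu.integrable_gagDensity.add hv.integrable_gagDensity)
    (measurable_fracPairDensity hu.1 hv.1).aestronglyMeasurable (Eventually.of_forall fun z ↦ ?_)
  have hK : 0 ≤ ‖z.1 - z.2‖ ^ ((N : ℝ) + s * p) := Real.rpow_nonneg (norm_nonneg _) _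
  rw [Pi.add_apply, gagDensity, gagDensity, ← add_div, fracPairDensity, norm_div,
    Real.norm_of_nonneg hK, Real.norm_eq_abs, abs_mul, abs_abs_rpow_sub_two_mul hp.ne']
  gcongr
  exact rpow_sub_one_mul_le_add hp.le (abs_nonneg _) (abs_nonneg _)

lemma memW0.fracPair_eq_integral (hp : 1 < p) (hu : memW0 N s p Ω u) (hv : memW0 N s p Ω v) :
    fracPair N s p u v = ∫ z, fracPairDensity N s p u v z :=
  (integral_prod (fracPairDensity N s p u v) (hu.integrable_fracPairDensity hp hv)).symm

lemma fracPair_self (hp : p ≠ 0) (u : EuclideanSpace ℝ (Fin N) → ℝ) :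
    fracPair N s p u u = gagE N s p u := by
  simp only [fracPair, gagE, abs_rpow_sub_two_mul_mul_self hp]

lemma fracPair_neg_left (u v : EuclideanSpace ℝ (Fin N) → ℝ) :
    fracPair N s p (fun x ↦ -u x) v = -fracPair N s p u v := by
  simp only [fracPair, ← integral_neg]
  congr! 4 with x y
  rw [neg_sub_neg, ← neg_sub, abs_neg_rpow_sub_two_mul_neg, neg_mul, neg_div]

lemma fracPair_congr_ae (huw : u =ᵐ[volume] w) (v : EuclideanSpace ℝ (Fin N) → ℝ) :
    fracPair N s p u v = fracPair N s p w v := by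
  refine integral_congr_ae ?_
  filter_upwards [huw] with x hx
  refine integral_congr_ae ?_
  filter_upwards [huw] with y hy
  rw [hx, hy]

lemma memW0.of_abs_sub_le (hp : 0 ≤ p) (hu : memW0 N s p Ω u) (hw : memW0 N s p Ω w)
    (hv : Measurable v) (hv0 : ∀ x, x ∉ Ω → v x = 0) {C : ℝ} (hC : 0 ≤ C)
    (hvuw : ∀ x y, |v x - v y| ≤ C * max |u x - u y| |w x - w y|) : memW0 N s p Ω v := by
  refine ⟨hv, ?_, hv0⟩
  change Integrable (gagDensity N s p v)
  have hint := (hu.integrable_gagDensity.add hw.integrable_gagDensity).const_mul (C ^ p)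
  refine hint.mono' (measurable_gagDensity hv).aestronglyMeasurable
    (Eventually.of_forall fun z ↦ ?_)
  have hpow : |v z.1 - v z.2| ^ p ≤ C ^ p * (|u z.1 - u z.2| ^ p + |w z.1 - w z.2| ^ p) :=
    calc |v z.1 - v z.2| ^ p ≤ (C * max |u z.1 - u z.2| |w z.1 - w z.2|) ^ p := by
          gcongr
          exact hvuw z.1 z.2
      _ = C ^ p * max |u z.1 - u z.2| |w z.1 - w z.2| ^ p := Real.mul_rpow hC (by positivity)
      _ ≤ C ^ p * (|u z.1 - u z.2| ^ p + |w z.1 - w z.2| ^ p) := by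
          gcongr
          exact max_rpow_le_add (abs_nonneg _) (abs_nonneg _)
  rw [Real.norm_of_nonneg (gagDensity_nonneg z), Pi.add_apply, gagDensity, gagDensity,
    gagDensity, ← add_div, ← mul_div_assoc]
  gcongr

lemma memW0.comp_lipschitzWith (hp : 0 ≤ p) (hu : memW0 N s p Ω u) {F : ℝ → ℝ} {C : ℝ≥0}
    (hF : LipschitzWith C F) (hF0 : F 0 = 0) : memW0 N s p Ω (fun x ↦ F (u x)) :=
  hu.of_abs_sub_le hp hu (hF.continuous.measurable.comp hu.1)
    (fun x hx ↦ by rw [hu.2.2 x hx, hF0]) C.coe_nonneg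
    (fun x y ↦ by rw [max_self]; exact hF.dist_le_mul (u x) (u y))

lemma memW0.gagE_comp_le (hp : 0 ≤ p) (hu : memW0 N s p Ω u) {F : ℝ → ℝ}
    (hF : LipschitzWith 1 F) (hF0 : F 0 = 0) : gagE N s p (fun x ↦ F (u x)) ≤ gagE N s p u := by
  have hFu := hu.comp_lipschitzWith hp hF hF0
  rw [hu.gagE_eq_integral, hFu.gagE_eq_integral]
  refine integral_mono hFu.integrable_gagDensity hu.integrable_gagDensity fun z ↦ ?_
  have hcontract : |F (u z.1) - F (u z.2)| ≤ |u z.1 - u z.2| := by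
    simpa [Real.dist_eq] using hF.dist_le_mul (u z.1) (u z.2)
  exact div_le_div_of_nonneg_right (Real.rpow_le_rpow (abs_nonneg _) hcontract hp)
    (Real.rpow_nonneg (norm_nonneg _) _)

lemma memW0.gagE_pos (hu : memW0 N s p Ω u) (hΩ : volume Ωᶜ ≠ 0)
    (hne : ¬ ∀ᵐ x, u x = 0) : 0 < gagE N s p u := by
  rw [hu.gagE_eq_integral]
  refine (integral_nonneg gagDensity_nonneg).lt_of_ne fun hzero ↦ ?_
  have hae := (integral_eq_zero_iff_of_nonneg gagDensity_nonneg
    hu.integrable_gagDensity).1 hzero.symm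
  have hnull : volume ({x | u x ≠ 0} ×ˢ Ωᶜ) = 0 := by
    refine measure_mono_null ?_ hae
    rintro ⟨x, y⟩ ⟨hx : u x ≠ 0, hy⟩
    have hy0 : u y = 0 := hu.2.2 y hy
    have hxy : x - y ≠ 0 := sub_ne_zero.2 fun hxy ↦ hx (hxy ▸ hy0)
    have : 0 < gagDensity N s p u (x, y) := by
      simp only [gagDensity, hy0, sub_zero]
      positivity
    exact this.ne'
  rw [Measure.volume_eq_prod, Measure.prod_prod, mul_eq_zero] at hnull
  exact hne (ae_iff.2 (hnull.resolve_right hΩ))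

end Energy

section PiconeGap

/-- The gap in the discrete Picone inequality: the energy density of `w` minus the pairing density
of `u` with the test function `piconeTest p u w ε`. -/
def piconeGap (N : ℕ) (s p : ℝ) (u w : EuclideanSpace ℝ (Fin N) → ℝ) (ε : ℝ)
    (z : EuclideanSpace ℝ (Fin N) × EuclideanSpace ℝ (Fin N)) : ℝ :=
  gagDensity N s p w z - fracPairDensity N s p u (piconeTest p u w ε) z

lemma piconeGap_nonneg (hp : 1 ≤ p) (hu0 : 0 ≤ u) (hw0 : 0 ≤ w) (hε : 0 < ε) (z) :
    0 ≤ piconeGap N s p u w ε z := by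
  have picone := discrete_picone hp (add_pos_of_nonneg_of_pos (hu0 z.1) hε)
    (add_pos_of_nonneg_of_pos (hu0 z.2) hε) (hw0 z.1) (hw0 z.2)
  rw [add_sub_add_right_eq_sub] at picone
  exact sub_nonneg.2 (div_le_div_of_nonneg_right picone (Real.rpow_nonneg (norm_nonneg _) _))

lemma measurable_piconeGap (hu : Measurable u) (hw : Measurable w) :
    Measurable (piconeGap N s p u w ε) :=
  (measurable_gagDensity hw).sub (measurable_fracPairDensity hu (measurable_piconeTest hu hw))

lemma memW0_piconeTest (hp : 1 < p) (hu : memW0 N s p Ω u) (hw : memW0 N s p Ω w)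
    (hu0 : 0 ≤ u) (hw0k : ∀ x, w x ∈ Icc 0 k) (hε : 0 < ε) :
    memW0 N s p Ω (piconeTest p u w ε) := by
  have : 0 ≤ k := (hw0k 0).1.trans (hw0k 0).2
  have : 0 < p - 1 := by linarith
  refine hw.of_abs_sub_le (by linarith) hu (measurable_piconeTest hu.1 hw.1) (fun x hx ↦ ?_)
    (C := p * k ^ (p - 1) * ε ^ (-(p - 1)) + k ^ p * ((p - 1) * ε ^ (-(p - 1) - 1)))
    (by positivity) (fun x y ↦ ?_)
  · rw [piconeTest, hw.2.2 x hx, Real.zero_rpow (by linarith), zero_div]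
  · have := abs_rpow_div_rpow_sub_le hp.le hε (le_add_of_nonneg_left (hu0 x))
      (le_add_of_nonneg_left (hu0 y)) (hw0k x) (hw0k y)
    rwa [add_sub_add_right_eq_sub] at this

lemma memW0.integrable_piconeGap (hp : 1 < p) (hu : memW0 N s p Ω u) (hw : memW0 N s p Ω w)
    (hu0 : 0 ≤ u) (hw0k : ∀ x, w x ∈ Icc 0 k) (hε : 0 < ε) :
    Integrable (piconeGap N s p u w ε) :=
  hw.integrable_gagDensity.sub
    (hu.integrable_fracPairDensity hp (memW0_piconeTest hp hu hw hu0 hw0k hε))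

lemma memW0.integral_piconeGap (hp : 1 < p) (hu : memW0 N s p Ω u) (hw : memW0 N s p Ω w)
    (hu0 : 0 ≤ u) (hw0k : ∀ x, w x ∈ Icc 0 k) (hε : 0 < ε) :
    ∫ z, piconeGap N s p u w ε z =
      gagE N s p w - fracPair N s p u (piconeTest p u w ε) := by
  have hmem := memW0_piconeTest hp hu hw hu0 hw0k hε
  rw [hw.gagE_eq_integral, hu.fracPair_eq_integral hp hmem]
  exact integral_sub hw.integrable_gagDensity (hu.integrable_fracPairDensity hp hmem)

lemma tendsto_rpow_mul_piconeGap (hp : 1 < p) {x y : EuclideanSpace ℝ (Fin N)} (hx : u x = 0)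
    (hy : 0 < u y) :
    Tendsto (fun ε ↦ ε ^ (p - 1) * piconeGap N s p u w ε (x, y)) (𝓝[>] 0)
      (𝓝 (u y ^ (p - 1) * w x ^ p / ‖x - y‖ ^ ((N : ℝ) + s * p))) := by
  have hp1 : 0 < p - 1 := by linarith
  set K := ‖x - y‖ ^ ((N : ℝ) + s * p) with hK
  have expand : ∀ᶠ ε : ℝ in 𝓝[>] 0,
      ε ^ (p - 1) * gagDensity N s p w (x, y) +
          u y ^ (p - 1) * (w x ^ p - ε ^ (p - 1) * (w y ^ p / (u y + ε) ^ (p - 1))) / K =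
        ε ^ (p - 1) * piconeGap N s p u w ε (x, y) := by
    filter_upwards [self_mem_nhdsWithin] with ε (hε : 0 < ε)
    have := Real.rpow_pos_of_pos hε (p - 1)
    simp only [piconeGap, fracPairDensity, piconeTest, hx, ← hK, zero_sub, zero_add,
      abs_neg_rpow_sub_two_mul_neg, abs_rpow_sub_two_mul_of_pos hy]
    field_simp
    ring
  have hvanish := tendsto_rpow_sub_one_nhdsGT_zero hp
  have hshift : Tendsto (fun ε ↦ (u y + ε) ^ (p - 1)) (𝓝[>] 0) (𝓝 (u y ^ (p - 1))) :=
    ((Real.continuous_rpow_const hp1.le).comp (continuous_const.add continuous_id)).tendsto' 0 _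
      (by simp) |>.mono_left inf_le_left
  have hquot := hvanish.mul (tendsto_const_nhds (x := w y ^ p) |>.div hshift
    (Real.rpow_pos_of_pos hy _).ne')
  refine Tendsto.congr' expand ?_
  simpa using (hvanish.mul_const (gagDensity N s p w (x, y))).add
    (((hquot.const_sub (w x ^ p)).const_mul (u y ^ (p - 1))).div_const K)

lemma memW0.ae_eq_zero_of_tendsto_integral_piconeGap (hp : 1 < p) (hu : memW0 N s p Ω u)
    (hw : memW0 N s p Ω w) (hu0 : 0 ≤ u) (hw0k : ∀ x, w x ∈ Icc 0 k) (hne : ¬ ∀ᵐ x, u x = 0)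
    {L : ℝ} (hL : Tendsto (fun ε ↦ ∫ z, piconeGap N s p u w ε z) (𝓝[>] 0) (𝓝 L)) :
    ∀ᵐ x, u x = 0 → w x = 0 := by
  have hscaled : Tendsto (fun ε : ℝ ↦ ∫ z, ε ^ (p - 1) * piconeGap N s p u w ε z) (𝓝[>] 0)
      (𝓝 0) := by
    simpa [integral_const_mul] using (tendsto_rpow_sub_one_nhdsGT_zero hp).mul hL
  have hlim := ae_eq_zero_of_tendsto_of_tendsto_integral_zero
    (fun ε ↦ ((measurable_piconeGap hu.1 hw.1).const_mul _).aestronglyMeasurable)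
    (by filter_upwards [self_mem_nhdsWithin] with ε hε
        using (hu.integrable_piconeGap hp hw hu0 hw0k hε).const_mul _)
    (by filter_upwards [self_mem_nhdsWithin] with ε hε
        using Eventually.of_forall fun z ↦ mul_nonneg (Real.rpow_nonneg (le_of_lt hε) _)
          (piconeGap_nonneg hp.le hu0 (fun x ↦ (hw0k x).1) hε z)) hscaled
  have hnull : volume ({x | ¬(u x = 0 → w x = 0)} ×ˢ {y | u y ≠ 0}) = 0 := by
    refine measure_mono_null ?_ hlim
    rintro ⟨x, y⟩ ⟨hx, hy : u y ≠ 0⟩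
    obtain ⟨hux, hwx⟩ : u x = 0 ∧ w x ≠ 0 := Classical.not_imp.1 hx
    have huy : 0 < u y := (hu0 y).lt_of_ne' hy
    have hwx : 0 < w x := (hw0k x).1.lt_of_ne' hwx
    have hxy : x - y ≠ 0 := sub_ne_zero.2 fun hxy ↦ hy (hxy ▸ hux)
    refine fun hall ↦ (?_ : 0 < u y ^ (p - 1) * w x ^ p / ‖x - y‖ ^ ((N : ℝ) + s * p)).ne'
      (hall _ (tendsto_rpow_mul_piconeGap hp hux huy))
    positivity
  rw [Measure.volume_eq_prod, Measure.prod_prod, mul_eq_zero] at hnull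
  exact ae_iff.2 (hnull.resolve_right fun hzero ↦ hne (ae_iff.2 hzero))

end PiconeGap

section Eigenpair

lemma isEigenpair.not_ae_eq_zero (hu : isEigenpair N s p Ω h lam u) : ¬ ∀ᵐ x, u x = 0 :=
  fun hzero ↦ hu.2.1 (ae_restrict_of_ae hzero)

lemma isEigenpair.congr_ae (hu : isEigenpair N s p Ω h lam u) (hw : memW0 N s p Ω w)
    (huw : u =ᵐ[volume] w) : isEigenpair N s p Ω h lam w := by
  refine ⟨hw, fun hzero ↦ hu.2.1 ?_, fun v hv ↦ ?_⟩
  · filter_upwards [hzero, ae_restrict_of_ae huw] with x hwx hux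
    rw [hux, hwx]
  · rw [← fracPair_congr_ae huw, hu.2.2 v hv]
    congr 1
    refine integral_congr_ae (ae_restrict_of_ae ?_)
    filter_upwards [huw] with x hx
    rw [hx]

lemma isEigenpair.neg (hp : 0 ≤ p) (hu : isEigenpair N s p Ω h lam u) :
    isEigenpair N s p Ω h lam (fun x ↦ -u x) := by
  refine ⟨hu.1.comp_lipschitzWith hp LipschitzWith.id.neg neg_zero,
    fun hzero ↦ hu.2.1 (hzero.mono fun x ↦ neg_eq_zero.1), fun v hv ↦ ?_⟩
  rw [fracPair_neg_left, hu.2.2 v hv, ← mul_neg, ← integral_neg]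
  simp only [abs_neg, mul_neg, neg_mul]

lemma isEigenpair.gagE_eq (hp : p ≠ 0) (hu : isEigenpair N s p Ω h lam u) :
    gagE N s p u = lam * ∫ x in Ω, h x * |u x| ^ p := by
  rw [← fracPair_self hp, hu.2.2 u hu.1]
  simp only [mul_assoc, ← abs_rpow_sub_two_mul_mul_self hp]

lemma isEigenpair.mul_integral_le_gagE_of_mem_Icc (hp : 1 < p) (hu : isEigenpair N s p Ω h lam u)
    (hu0 : 0 ≤ u) (hw : memW0 N s p Ω w) (hw0k : ∀ x, w x ∈ Icc 0 k)
    (hint : IntegrableOn (fun x ↦ h x * w x ^ p) Ω) :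
    lam * ∫ x in Ω, h x * w x ^ p ≤ gagE N s p w := by
  have hgap : Tendsto (fun ε ↦ ∫ z, piconeGap N s p u w ε z) (𝓝[>] 0)
      (𝓝 (gagE N s p w - lam * ∫ x in {x | u x ≠ 0}, h x * w x ^ p ∂volume.restrict Ω)) := by
    refine (((tendsto_integral_mul_piconeTest hp hu.1.1 hu0 hint).const_mul lam).const_sub
      (gagE N s p w)).congr' ?_
    filter_upwards [self_mem_nhdsWithin] with ε hε
    rw [hu.1.integral_piconeGap hp hw hu0 hw0k hε,
      hu.2.2 _ (memW0_piconeTest hp hu.1 hw hu0 hw0k hε)]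
  have hsupport : ∀ᵐ x, u x = 0 → w x = 0 :=
    hu.1.ae_eq_zero_of_tendsto_integral_piconeGap hp hw hu0 hw0k hu.not_ae_eq_zero hgap
  have hlimit : ∫ x in {x | u x ≠ 0}, h x * w x ^ p ∂volume.restrict Ω =
      ∫ x in Ω, h x * w x ^ p := by
    refine setIntegral_eq_integral_of_ae_compl_eq_zero (ae_restrict_of_ae ?_)
    filter_upwards [hsupport] with x hx hux
    rw [hx (not_not.1 hux), Real.zero_rpow (by linarith), mul_zero]
  rw [hlimit] at hgap
  refine sub_nonneg.1 (ge_of_tendsto hgap ?_)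
  filter_upwards [self_mem_nhdsWithin] with ε hε
  exact integral_nonneg (piconeGap_nonneg hp.le hu0 (fun x ↦ (hw0k x).1) hε)

lemma isEigenpair.mul_integral_le_gagE (hp : 1 < p) (hu : isEigenpair N s p Ω h lam u)
    (hu0 : 0 ≤ u) (hφ : memW0 N s p Ω φ) (hint : IntegrableOn (fun x ↦ h x * |φ x| ^ p) Ω) :
    lam * ∫ x in Ω, h x * |φ x| ^ p ≤ gagE N s p φ := by
  have hp0 : 0 < p := by linarith
  have hlim := (tendsto_integral_mul_min_rpow hp0 hφ.1.abs (fun x ↦ abs_nonneg (φ x))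
    hint).const_mul lam
  refine le_of_tendsto' hlim fun n ↦ ?_
  have htrunc : LipschitzWith 1 fun t : ℝ ↦ min |t| n := lipschitzWith_one_norm.min_const n
  have htrunc0 : min |(0 : ℝ)| n = 0 := by simp
  have hbound (x) : min |φ x| n ∈ Icc (0 : ℝ) n :=
    ⟨le_min (abs_nonneg _) n.cast_nonneg, min_le_right _ _⟩
  have hmem := hφ.comp_lipschitzWith hp0.le htrunc htrunc0
  have hint' := integrable_mul_rpow_of_le hp0 hφ.1.abs hmem.1 (fun x ↦ (hbound x).1)
    (fun x ↦ min_le_left _ _) hint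
  exact (hu.mul_integral_le_gagE_of_mem_Icc hp hu0 hmem hbound hint').trans
    (hφ.gagE_comp_le hp0.le htrunc htrunc0)

lemma memW0.exists_integral_eq_one (hp : 0 < p) (hu : memW0 N s p Ω u)
    (hpos : 0 < ∫ x in Ω, h x * |u x| ^ p) :
    ∃ v, memW0 N s p Ω v ∧ ∫ x in Ω, h x * |v x| ^ p = 1 := by
  set I := ∫ x in Ω, h x * |u x| ^ p
  have hc : |I ^ (-p⁻¹)| ^ p = I⁻¹ := by
    rw [abs_of_nonneg (Real.rpow_nonneg hpos.le _), ← Real.rpow_mul hpos.le, neg_mul,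
      inv_mul_cancel₀ hp.ne', Real.rpow_neg_one]
  refine ⟨fun x ↦ I ^ (-p⁻¹) * u x,
    hu.comp_lipschitzWith hp.le (lipschitzWith_smul (I ^ (-p⁻¹))) (mul_zero _), ?_⟩
  simp only [abs_mul, Real.mul_rpow (abs_nonneg _) (abs_nonneg _), hc, mul_left_comm _ I⁻¹,
    integral_const_mul]
  exact inv_mul_cancel₀ hpos.ne'

lemma isEigenpair.le_lam1 (hp : 1 < p) (hu : isEigenpair N s p Ω h lam u) (hu0 : 0 ≤ u)
    (hpos : 0 < ∫ x in Ω, h x * |u x| ^ p) : lam ≤ lam1 N s p Ω h := by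
  obtain ⟨v, hv, hv1⟩ := hu.1.exists_integral_eq_one (by linarith) hpos
  refine le_csInf ⟨_, v, hv, hv1, rfl⟩ ?_
  rintro _ ⟨φ, hφ, hφ1, rfl⟩
  simpa [hφ1] using hu.mul_integral_le_gagE hp hu0 hφ (integrable_of_integral_eq_one hφ1)

lemma lam1_nonneg : 0 ≤ lam1 N s p Ω h := by
  refine Real.sInf_nonneg ?_
  rintro _ ⟨φ, -, -, rfl⟩
  exact gagE_nonneg φ

lemma isEigenpair.integral_pos (hp : p ≠ 0) (hΩ : volume Ω ≠ ⊤) (hu : isEigenpair N s p Ω h lam u)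
    (hlam : 0 < lam) (hpos : volume {x ∈ Ω | 0 < h x} ≠ 0) :
    0 < ∫ x in Ω, h x * |u x| ^ p := by
  rcases subsingleton_or_nontrivial (EuclideanSpace ℝ (Fin N)) with _ | _
  · -- For `N = 0` every energy vanishes, so positivity has to come from `h` itself.
    obtain ⟨x, -, hhx⟩ := nonempty_of_measure_ne_zero hpos
    have hux : u x ≠ 0 := fun hux ↦ hu.not_ae_eq_zero
      (Eventually.of_forall fun y ↦ Subsingleton.elim x y ▸ hux)
    refine setIntegral_pos_of_subsingleton (fun hzero ↦ hpos ?_) hΩ (x := x) (by positivity)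
    exact measure_mono_null (sep_subset _ _) hzero
  · have henergy := hu.1.gagE_pos (measure_compl_ne_zero_of_ne_top
      (measure_univ_of_isAddLeftInvariant volume) hΩ) hu.not_ae_eq_zero
    rw [hu.gagE_eq hp] at henergy
    exact pos_of_mul_pos_right henergy hlam.le

lemma isEigenpair.le_lam1_of_ae_nonneg (hp : 1 < p) (hΩ : volume Ω ≠ ⊤)
    (hpos : volume {x ∈ Ω | 0 < h x} ≠ 0) (hu : isEigenpair N s p Ω h lam u)
    (hu0 : ∀ᵐ x, 0 ≤ u x) : lam ≤ lam1 N s p Ω h := by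
  by_contra! hlam
  have hmax : isEigenpair N s p Ω h lam (fun x ↦ max (u x) 0) :=
    hu.congr_ae (hu.1.comp_lipschitzWith (by linarith) (LipschitzWith.id.max_const 0) (max_self 0))
      (hu0.mono fun x hx ↦ (max_eq_left hx).symm)
  exact hlam.not_ge (hmax.le_lam1 hp (fun x ↦ le_max_right _ _)
    (hmax.integral_pos (by linarith) hΩ (lam1_nonneg.trans_lt hlam) hpos))

lemma isEigenpair.not_ae_max_neg_eq_zero (hp : 1 < p) (hΩ : volume Ω ≠ ⊤)
    (hpos : volume {x ∈ Ω | 0 < h x} ≠ 0) (hu : isEigenpair N s p Ω h lam u)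
    (hlam : lam1 N s p Ω h < lam) : ¬ ∀ᵐ x ∂volume.restrict Ω, max (-u x) 0 = 0 := by
  refine fun hneg ↦ hlam.not_ge (hu.le_lam1_of_ae_nonneg hp hΩ hpos ?_)
  filter_upwards [ae_imp_of_ae_restrict hneg] with x hx
  by_cases hxΩ : x ∈ Ω
  · exact neg_nonpos.1 (max_eq_right_iff.1 (hx hxΩ))
  · exact (hu.1.2.2 x hxΩ).ge

end Eigenpair

end

theorem stmt13_general (N : ℕ) (Ω : Set (EuclideanSpace ℝ (Fin N))) (hΩ : volume Ω ≠ ⊤)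
    (s p : ℝ) (hp : 1 < p) (h : EuclideanSpace ℝ (Fin N) → ℝ)
    (hpos : 0 < volume {x ∈ Ω | 0 < h x})
    (lam : ℝ) (u : EuclideanSpace ℝ (Fin N) → ℝ)
    (heig : isEigenpair N s p Ω h lam u) (hlam : lam1 N s p Ω h < lam) :
    ¬ (∀ᵐ x ∂volume.restrict Ω, max (u x) 0 = 0) ∧
    ¬ (∀ᵐ x ∂volume.restrict Ω, max (-u x) 0 = 0) := by
  refine ⟨?_, heig.not_ae_max_neg_eq_zero hp hΩ hpos.ne' hlam⟩
  simpa only [neg_neg] using (heig.neg (by linarith)).not_ae_max_neg_eq_zero hp hΩ hpos.ne' hlam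

/-- for `h ∈ W̃_p` with `|{h > 0} ∩ Ω| > 0`, any eigenfunction `u` associated
with an eigenvalue `λ > λ₁` is sign-changing: `u₊ ≢ 0` and `u₋ ≢ 0` in `Ω`. -/
theorem stmt13 (N : ℕ) (Ω : Set (EuclideanSpace ℝ (Fin N)))
    (hΩo : IsOpen Ω) (hΩc : IsConnected Ω) (hΩb : Bornology.IsBounded Ω)
    (s p : ℝ) (hs0 : 0 < s) (hs1 : s ≤ 1) (hp : 1 < p)
    (h : EuclideanSpace ℝ (Fin N) → ℝ) (hmeas : Measurable h)
    (hW : inWtq N Ω s p p h)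
    (hpos : 0 < volume {x ∈ Ω | 0 < h x})
    (lam : ℝ) (u : EuclideanSpace ℝ (Fin N) → ℝ)
    (heig : isEigenpair N s p Ω h lam u)
    (hlam : lam1 N s p Ω h < lam) :
    ¬ (∀ᵐ x ∂volume.restrict Ω, max (u x) 0 = 0) ∧
    ¬ (∀ᵐ x ∂volume.restrict Ω, max (-u x) 0 = 0) :=
  stmt13_general N Ω hΩb.measure_lt_top.ne s p hp h hpos lam u heig hlam

end
end
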